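/- (Lemma 4.1, bottom boundary separation.) Fix p, η, M^bot, M^side ∈ (0,∞), k ∈ ℕ and δ2 ∈ (0,1/2). There exist N5 ∈ ℕ, δ^sep > 0 and Δ^sep ∈ (0,δ2), depending on p, η, M^bot, M^side, k, δ2, such that the following holds for all integers n ≥ N5. Assume: x⃗, y⃗ ∈ 𝔚_k with |x_i| ≤ M^side·n^{1/2} and |y_i − p·n| ≤ M^side·n^{1/2} for all i ∈ ⟦1,k⟧; g : ⟦0,n⟧ → [−∞,∞) with g(s) ≤ p·s + M^bot·n^{1/2} for all s ∈ ⟦0,n⟧; Ω_Inter(0,n,x⃗,y⃗,∞,g) ≠ ∅; t0 ∈ [δ2, 1−δ2]; and set F_n(t0·n) = ℤ ∩ [t0·n − Δ^sep·n, t0·n + Δ^sep·n]. If (Q_1,…,Q_k) is distributed according to the uniform probability measure on Ω_Inter(0,n,x⃗,y⃗,∞,g) (paths extended by linear interpolation), then P( Q_k(t0·n) − p·t0·n ≥ g(s) − p·s + δ^sep·n^{1/2} for all s ∈ F_n(t0·n) ) > 1 − η. -/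

import Mathlib

open MeasureTheory Filter Topology ProbabilityTheory
open scoped ENNReal NNReal

/-- An increasing (integer) path on the integer interval `⟦T0, T1⟧`,
extended constantly to the rest of `ℤ`. -/
def IncrPath (T0 T1 : ℤ) (L : ℤ → ℤ) : Prop :=
  (∀ j : ℤ, T0 ≤ j → j < T1 → L j ≤ L (j + 1)) ∧
  (∀ s : ℤ, s ≤ T0 → L s = L T0) ∧ (∀ s : ℤ, T1 ≤ s → L s = L T1)

/-- The set `Ω(T0,T1,x,y)` of increasing paths from `(T0,x)` to `(T1,y)`. -/
def OmegaPath (T0 T1 : ℤ) (x y : ℤ) : Set (ℤ → ℤ) :=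
  {L | IncrPath T0 T1 L ∧ L T0 = x ∧ L T1 = y}

/-- Linear interpolation of a real-valued function defined on `ℤ`. -/
noncomputable def interp (f : ℤ → ℝ) (t : ℝ) : ℝ :=
  f ⌊t⌋ + (t - ⌊t⌋) * (f (⌊t⌋ + 1) - f ⌊t⌋)

/-- Linear interpolation of an integer-valued function on `ℤ`. -/
noncomputable def interpZ (L : ℤ → ℤ) : ℝ → ℝ :=
  interp fun s => (L s : ℝ)

lemma interp_eq_on (f : ℤ → ℝ) (n : ℤ) :
    ∀ t ∈ Set.Icc (n : ℝ) ((n : ℝ) + 1),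
      interp f t = f n + (t - n) * (f (n + 1) - f n) := by
  intro t ht
  rcases lt_or_eq_of_le ht.2 with h | h
  · have hfl : ⌊t⌋ = n := by
      rw [Int.floor_eq_iff]
      · exact ⟨ht.1, by exact_mod_cast h⟩
    simp [interp, hfl]
  · have hfl : ⌊t⌋ = n + 1 := by
      rw [h, show ((n : ℝ) + 1) = ((n + 1 : ℤ) : ℝ) by push_cast; ring, Int.floor_intCast]
    rw [interp, hfl, h]
    push_cast
    ring

lemma continuous_interp (f : ℤ → ℝ) : Continuous (interp f) := by
  have hcov : (⋃ n : ℤ, Set.Icc (n : ℝ) ((n : ℝ) + 1)) = Set.univ := by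
    ext t
    simp only [Set.mem_iUnion, Set.mem_univ, iff_true, Set.mem_Icc]
    exact ⟨⌊t⌋, Int.floor_le t, (Int.lt_floor_add_one t).le⟩
  have hlf : LocallyFinite fun n : ℤ => Set.Icc (n : ℝ) ((n : ℝ) + 1) := by
    intro x
    refine ⟨Set.Ioo (x - 1) (x + 1), Ioo_mem_nhds (by linarith) (by linarith), ?_⟩
    apply Set.Finite.subset (Set.finite_Icc (⌊x⌋ - 2) (⌊x⌋ + 2))
    rintro n ⟨t, ht1, ht2⟩
    simp only [Set.mem_Icc] at ht1 ⊢
    simp only [Set.mem_Ioo] at ht2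
    constructor
    · have h1 : ((⌊x⌋ - 2 : ℤ) : ℝ) < n := by
        push_cast
        have := Int.floor_le x
        linarith [ht1.2, ht2.1]
      exact_mod_cast h1.le
    · have h2 : (n : ℝ) < ((⌊x⌋ + 2 : ℤ) : ℝ) := by
        push_cast
        have := Int.lt_floor_add_one x
        linarith [ht1.1, ht2.2]
      exact_mod_cast h2.le
  refine hlf.continuous hcov (fun n => isClosed_Icc) (fun n => ?_)
  have hc : ContinuousOn (fun t : ℝ => f n + (t - n) * (f (n + 1) - f n))
      (Set.Icc (n : ℝ) ((n : ℝ) + 1)) := (by continuity : Continuous _).continuousOn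
  exact hc.congr (interp_eq_on f n)

/-- The set `Ω_Inter(T0,T1,x⃗,y⃗,f,g)` of `k`-tuples of increasing paths with prescribed
entrance and exit data, interlacing with each other and with the boundary functions
`f` (above) and `g` (below). -/
def OmegaInter (T0 T1 : ℤ) {k : ℕ} (x y : Fin k → ℤ) (f g : ℤ → EReal) :
    Set (Fin k → ℤ → ℤ) :=
  {Q | (∀ i, IncrPath T0 T1 (Q i)) ∧ (∀ i, Q i T0 = x i) ∧ (∀ i, Q i T1 = y i) ∧
    ∀ r : ℤ, T0 < r → r ≤ T1 →
      (∀ i : Fin k, (i : ℕ) = 0 → ((Q i r : ℝ) : EReal) ≤ f (r - 1)) ∧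
      (∀ i j : Fin k, (j : ℕ) = (i : ℕ) + 1 → Q j r ≤ Q i (r - 1)) ∧
      (∀ i : Fin k, (i : ℕ) = k - 1 → g r ≤ ((Q i (r - 1) : ℝ) : EReal))}

/-- The random variable `X` is uniformly distributed on the (finite) set `S` under `P`. -/
def UniformOn {Ω E : Type*} [MeasurableSpace Ω] (P : Measure Ω) (X : Ω → E)
    (S : Set E) : Prop :=
  (∀ ω, X ω ∈ S) ∧ ∀ Q ∈ S, P {ω | X ω = Q} = ((Nat.card S : ℝ≥0∞))⁻¹

/-!
The survival function of the bottom curve at a fixed time is log-concave: pushing one of two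
ensembles up by a constant and taking lattice operations preserves interlacing, so the
Ahlswede–Daykin inequality applies. It therefore suffices to know two things about the curve near
a time `s` at which the recentered boundary `g s - p s` is maximal. It is above `g s`, hence above
`g s + p (t - s) - δ √n` at times `t` close to `s` with probability near one. And with probability
bounded below, by a constant which depends only on the parameters, it is above `g s + p (t - s)` by
a large multiple of `√n`. By log-concavity the curve then exceeds `g s + p (t - s) + δ √n` with
probability near one, provided that `δ` is small enough.

Both facts are reduced by stochastic domination to independent random bridges: the first to their
concentration around a chord, by a maximal inequality, and the second to the cost of moving a bridge
from a chord to a chord bent upwards.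
-/

open Set

/-! ### Proportions of finite sets -/

section Proportion

variable {α Ω : Type*} {A : Set α} {G H : α → Prop} {θ θ' : ℝ}

/-- The elements of `A` satisfying `G` form at least a proportion `θ` of `A`; for `A` finite and
nonempty, `G` has probability at least `θ` under the uniform measure on `A`. -/
def ProportionGE (θ : ℝ) (A : Set α) (G : α → Prop) : Prop :=
  θ * A.ncard ≤ {a ∈ A | G a}.ncard

namespace ProportionGE

lemma mono (hA : A.Finite) (hGH : ∀ a ∈ A, G a → H a) (h : ProportionGE θ A G) :
    ProportionGE θ A H :=
  h.trans <| Nat.cast_le.2 <|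
    ncard_le_ncard (fun a ha => ⟨ha.1, hGH a ha.1 ha.2⟩) (hA.subset (sep_subset A H))

lemma of_le (hθ : θ' ≤ θ) (h : ProportionGE θ A G) : ProportionGE θ' A G :=
  (mul_le_mul_of_nonneg_right hθ (Nat.cast_nonneg _)).trans h

lemma of_forall (hG : ∀ a ∈ A, G a) : ProportionGE 1 A G := by
  rw [ProportionGE, one_mul, sep_eq_self_iff_mem_true.2 hG]

lemma trans (hA : A.Finite) (hθ' : 0 ≤ θ') (hG : ProportionGE θ A G)
    (hH : ProportionGE θ' {a ∈ A | G a} H) : ProportionGE (θ' * θ) A H := by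
  refine mono (G := fun a => G a ∧ H a) hA (fun a _ h => h.2) ?_
  calc θ' * θ * A.ncard = θ' * (θ * A.ncard) := mul_assoc ..
    _ ≤ θ' * {a ∈ A | G a}.ncard := mul_le_mul_of_nonneg_left hG hθ'
    _ ≤ {a ∈ {a ∈ A | G a} | H a}.ncard := hH
    _ = {a ∈ A | G a ∧ H a}.ncard := by simp only [mem_ofPred_eq, and_assoc]

end ProportionGE

lemma UniformOn.measure_le [MeasurableSpace Ω] {P : Measure Ω} {X : Ω → α} (hA : A.Finite)
    (hX : UniformOn P X A) (G : α → Prop) :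
    P {ω | G (X ω)} ≤ {a ∈ A | G a}.ncard * (A.ncard : ℝ≥0∞)⁻¹ := by
  have hfin : {a ∈ A | G a}.Finite := hA.subset (sep_subset A G)
  have hcover : {ω | G (X ω)} ⊆ ⋃ a ∈ hfin.toFinset, {ω | X ω = a} := fun ω hω =>
    mem_biUnion (hfin.mem_toFinset.2 ⟨hX.1 ω, hω⟩) rfl
  calc P {ω | G (X ω)} ≤ ∑ a ∈ hfin.toFinset, P {ω | X ω = a} :=
        (measure_mono hcover).trans (measure_biUnion_finset_le _ _)
    _ = ∑ _a ∈ hfin.toFinset, (A.ncard : ℝ≥0∞)⁻¹ :=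
        Finset.sum_congr rfl fun a ha => by simpa using hX.2 a (hfin.mem_toFinset.1 ha).1
    _ = {a ∈ A | G a}.ncard * (A.ncard : ℝ≥0∞)⁻¹ := by
        rw [Finset.sum_const, nsmul_eq_mul, ncard_eq_toFinset_card _ hfin]

lemma UniformOn.ofReal_le_measure [MeasurableSpace Ω] {P : Measure Ω} [IsProbabilityMeasure P]
    {X : Ω → α} (hA : A.Finite) (hX : UniformOn P X A) (hG : ProportionGE θ A G) :
    ENNReal.ofReal θ ≤ P {ω | G (X ω)} := by
  obtain ⟨ω₀⟩ := nonempty_of_isProbabilityMeasure P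
  have hpos : (0 : ℝ) < A.ncard := Nat.cast_pos.2 ((ncard_pos hA).2 ⟨X ω₀, hX.1 ω₀⟩)
  have hsplit : ({a ∈ A | G a}.ncard : ℝ) + {a ∈ A | ¬ G a}.ncard = A.ncard := by
    exact_mod_cast ncard_inter_add_ncard_sdiff_eq_ncard A {a | G a} hA
  have hgood : θ * A.ncard ≤ {a ∈ A | G a}.ncard := hG
  have hθ : 0 ≤ 1 - θ := by
    have hle : ({a ∈ A | G a}.ncard : ℝ) ≤ A.ncard :=
      Nat.cast_le.2 (ncard_le_ncard (sep_subset A G) hA)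
    exact sub_nonneg.2 (le_of_mul_le_mul_right ((hgood.trans hle).trans_eq (one_mul _).symm) hpos)
  have hbad : P {ω | ¬ G (X ω)} ≤ ENNReal.ofReal (1 - θ) := by
    refine (hX.measure_le hA fun a => ¬ G a).trans ?_
    rw [← div_eq_mul_inv, ← ENNReal.ofReal_natCast, ← ENNReal.ofReal_natCast (A.ncard),
      ← ENNReal.ofReal_div_of_pos hpos]
    refine ENNReal.ofReal_le_ofReal ((div_le_iff₀ hpos).2 ?_)
    linarith
  have huniv : (1 : ℝ≥0∞) ≤ P {ω | G (X ω)} + P {ω | ¬ G (X ω)} := by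
    rw [← measure_univ (μ := P), ← union_compl_self {ω | G (X ω)}]
    exact measure_union_le _ _
  calc ENNReal.ofReal θ = ENNReal.ofReal (1 - (1 - θ)) := by rw [sub_sub_cancel]
    _ = 1 - ENNReal.ofReal (1 - θ) := by rw [ENNReal.ofReal_sub 1 hθ, ENNReal.ofReal_one]
    _ ≤ P {ω | G (X ω)} := tsub_le_iff_right.2 (huniv.trans (by gcongr))

end Proportion

lemma ncard_mul_ncard_le_of_inf_mem_of_sup_mem {α : Type*} [DistribLattice α] {A B C D : Set α}
    (hC : C.Finite) (hD : D.Finite) (hinf : ∀ a ∈ A, ∀ b ∈ B, a ⊓ b ∈ C)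
    (hsup : ∀ a ∈ A, ∀ b ∈ B, a ⊔ b ∈ D) : A.ncard * B.ncard ≤ C.ncard * D.ncard := by
  classical
  by_cases hAB : A.Finite ∧ B.Finite
  · lift A to Finset α using hAB.1
    lift B to Finset α using hAB.2
    lift C to Finset α using hC
    lift D to Finset α using hD
    simp only [ncard_coe_finset]
    exact (Finset.le_card_infs_mul_card_sups A B).trans <| Nat.mul_le_mul
      (Finset.card_le_card (Finset.infs_subset_iff.2 hinf))
      (Finset.card_le_card (Finset.sups_subset_iff.2 hsup))
  · rcases not_and_or.1 hAB with h | h <;> simp [Set.Infinite.ncard h]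

/-! ### Bridges -/

section Bridges

variable {c T₀ T₁ T₂ z w : ℤ} {φ ψ : ℤ → ℤ → Prop} {Q : ℤ → ℤ}

/-- Increasing paths on `⟦T₀, T₁⟧` from `z` to `w` satisfying the pointwise constraint `φ`. Outside
of the interval they take the value `c`, which makes a bridge on a short interval comparable with
paths on a longer one once `c` is low enough. -/
def bridges (c T₀ T₁ z w : ℤ) (φ : ℤ → ℤ → Prop) : Set (ℤ → ℤ) :=
  {Q | MonotoneOn Q (Icc T₀ T₁) ∧ Q T₀ = z ∧ Q T₁ = w ∧ (∀ s ∉ Icc T₀ T₁, Q s = c) ∧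
    ∀ s ∈ Icc T₀ T₁, φ s (Q s)}

lemma bridges_mono (h : ∀ s ∈ Icc T₀ T₁, ∀ v, φ s v → ψ s v) :
    bridges c T₀ T₁ z w φ ⊆ bridges c T₀ T₁ z w ψ :=
  fun _ ⟨hmono, hz, hw, hc, hφ⟩ => ⟨hmono, hz, hw, hc, fun s hs => h s hs _ (hφ s hs)⟩

lemma mem_Icc_of_mem_bridges (hQ : Q ∈ bridges c T₀ T₁ z w φ) {s : ℤ} (hs : s ∈ Icc T₀ T₁) :
    Q s ∈ Icc z w := by
  obtain ⟨hmono, rfl, rfl, -⟩ := hQ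
  have hT := hs.1.trans hs.2
  exact ⟨hmono (left_mem_Icc.2 hT) hs hs.1, hmono hs (right_mem_Icc.2 hT) hs.2⟩

lemma finite_of_forall_mem_Icc {A : Set (ℤ → ℤ)} {lo hi : ℤ}
    (hbdd : ∀ Q ∈ A, ∀ s ∈ Icc T₀ T₁, Q s ∈ Icc lo hi)
    (hinj : ∀ Q ∈ A, ∀ Q' ∈ A, EqOn Q Q' (Icc T₀ T₁) → Q = Q') : A.Finite := by
  refine Finite.of_injOn (f := fun (Q : ℤ → ℤ) (s : Icc T₀ T₁) => Q s)
    (t := {f | ∀ s, f s ∈ Icc lo hi}) (fun Q hQ s => hbdd Q hQ s s.2)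
    (fun Q hQ Q' hQ' h => hinj Q hQ Q' hQ' fun s hs => ?_)
    (Finite.pi' fun _ => finite_Icc _ _)
  exact congrFun h ⟨s, hs⟩

lemma bridges_finite : (bridges c T₀ T₁ z w φ).Finite := by
  refine finite_of_forall_mem_Icc (fun Q hQ s hs => mem_Icc_of_mem_bridges hQ hs)
    fun Q ⟨_, _, _, hQ, _⟩ Q' ⟨_, _, _, hQ', _⟩ h => funext fun s => ?_
  by_cases hs : s ∈ Icc T₀ T₁
  · exact h hs
  · rw [hQ s hs, hQ' s hs]

lemma piecewise_mem_bridges {Q' : ℤ → ℤ} {ζ : ℤ} (h₀₁ : T₀ ≤ T₁) (h₁₂ : T₁ ≤ T₂)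
    (hQ : Q ∈ bridges c T₀ T₁ z ζ φ) (hQ' : Q' ∈ bridges c T₁ T₂ ζ w φ) :
    (fun s => if s ≤ T₁ then Q s else Q' s) ∈ bridges c T₀ T₂ z w φ := by
  have hle {s : ℤ} (hs : s ∈ Icc T₀ T₁) : Q s ≤ ζ := (mem_Icc_of_mem_bridges hQ hs).2
  have hge {s : ℤ} (hs : s ∈ Icc T₁ T₂) : ζ ≤ Q' s := (mem_Icc_of_mem_bridges hQ' hs).1
  obtain ⟨hmono, hz, hζ, hc, hφ⟩ := hQ
  obtain ⟨hmono', hζ', hw, hc', hφ'⟩ := hQ'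
  refine ⟨fun a ha b hb hab => ?_, by simp [h₀₁, hz], ?_, fun s hs => ?_, fun s hs => ?_⟩ <;>
    simp only [mem_Icc] at *
  · grind [MonotoneOn]
  · grind
  · grind
  · grind

lemma ncard_bridges_through (h₀₁ : T₀ ≤ T₁) (h₁₂ : T₁ ≤ T₂) (ζ : ℤ) :
    {Q ∈ bridges c T₀ T₂ z w φ | Q T₁ = ζ}.ncard
      = (bridges c T₀ T₁ z ζ φ).ncard * (bridges c T₁ T₂ ζ w φ).ncard := by
  rw [← ncard_prod]
  refine BijOn.ncard_eq (f := fun Q =>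
    ((fun s => if s ≤ T₁ then Q s else c), fun s => if T₁ ≤ s then Q s else c)) ?_
  refine InvOn.bijOn (f' := fun q s => if s ≤ T₁ then q.1 s else q.2 s)
    ⟨fun Q _ => ?_, fun ⟨Q, Q'⟩ ⟨hQ, hQ'⟩ => ?_⟩ (fun Q ⟨hQ, _⟩ => ?_) fun ⟨Q, Q'⟩ ⟨hQ, hQ'⟩ => ?_
  · grind
  · obtain ⟨-, -, hζ, hc, -⟩ := hQ
    obtain ⟨-, hζ', -, hc', -⟩ := hQ'
    simp only [mem_Icc] at *
    ext s <;> grind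
  · obtain ⟨hmono, hz, hw, hc, hφ⟩ := hQ
    simp only [mem_prod, bridges, MonotoneOn, mem_Icc, mem_ofPred_eq] at *
    grind
  · exact ⟨piecewise_mem_bridges h₀₁ h₁₂ hQ hQ', by simpa using hQ.2.2.1⟩

lemma bridges_eq_empty_of_not_start (hT : T₀ ≤ T₁) (h : ¬ φ T₀ z) :
    bridges c T₀ T₁ z w φ = ∅ :=
  eq_empty_of_forall_notMem fun _ ⟨_, hz, _, _, hφ⟩ => h (hz ▸ hφ T₀ (left_mem_Icc.2 hT))

lemma ncard_bridges_self (h : φ T₀ z) : (bridges c T₀ T₀ z z φ).ncard = 1 := by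
  refine ncard_eq_one.2 ⟨fun s => if s = T₀ then z else c, eq_singleton_iff_unique_mem.2 ⟨?_, ?_⟩⟩
  · simp only [bridges, MonotoneOn, mem_Icc, mem_ofPred_eq]
    grind
  · rintro Q ⟨-, hz, -, hc, -⟩
    simp only [mem_Icc] at hc
    grind

lemma ncard_bridges_succ (hzw : z ≤ w) (h₀ : φ T₀ z) (h₁ : φ (T₀ + 1) w) :
    (bridges c T₀ (T₀ + 1) z w φ).ncard = 1 := by
  refine ncard_eq_one.2 ⟨fun s => if s = T₀ then z else if s = T₀ + 1 then w else c,
    eq_singleton_iff_unique_mem.2 ⟨?_, ?_⟩⟩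
  · simp only [bridges, MonotoneOn, mem_Icc, mem_ofPred_eq]
    grind
  · rintro Q ⟨-, hz, hw, hc, -⟩
    simp only [mem_Icc] at hc
    grind

lemma ncard_bridges_sub (a : ℤ) :
    (bridges c T₀ T₁ (z - a) (w - a) (fun s v => φ s (v + a))).ncard
      = (bridges (c + a) T₀ T₁ z w φ).ncard := by
  refine BijOn.ncard_eq (f := fun Q s => Q s + a) ?_
  refine InvOn.bijOn (f' := fun Q s => Q s - a)
    ⟨fun Q _ => funext fun s => add_sub_cancel_right (Q s) a,
      fun Q _ => funext fun s => sub_add_cancel (Q s) a⟩ (fun Q hQ => ?_) fun Q hQ => ?_ <;>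
  · obtain ⟨hmono, hz, hw, hc, hφ⟩ := hQ
    simp only [bridges, MonotoneOn, mem_Icc, mem_ofPred_eq] at *
    grind

end Bridges

/-! ### Counting bridges -/

section Multichoose

variable (l m : ℕ)

lemma sum_range_multichoose :
    ∑ j ∈ Finset.range (m + 1), l.multichoose j = (l + 1).multichoose m := by
  rw [Nat.sum_range_multichoose m l, Nat.multichoose_eq, ← Nat.choose_symm_add]
  congr 1
  omega

lemma succ_mul_multichoose_succ :
    (m + 1 : ℝ) * l.multichoose (m + 1) = (l + m) * l.multichoose m := by
  rcases l with _ | l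
  · rcases m with _ | m <;> simp
  · rw [Nat.multichoose_eq, Nat.multichoose_eq, show l + 1 + (m + 1) - 1 = l + m + 1 by omega,
      show l + 1 + m - 1 = l + m by omega]
    have h := Nat.add_one_mul_choose_eq (l + m) m
    exact_mod_cast show _ = _ by linarith

lemma succ_mul_multichoose_succ_eq_mul_succ_multichoose :
    (m + 1 : ℝ) * l.multichoose (m + 1) = l * (l + 1).multichoose m := by
  have h := succ_mul_multichoose_succ (l + 1) m
  rw [Nat.multichoose_succ_succ] at h
  push_cast at h
  linarith [succ_mul_multichoose_succ l m]

lemma sum_mul_multichoose :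
    (∑ j ∈ Finset.range (m + 1), j * l.multichoose j : ℝ)
      = m * l / (l + 1) * (l + 1).multichoose m := by
  have h₀ : (l + 1 : ℝ) ≠ 0 := by positivity
  induction m with
  | zero => simp
  | succ m ih =>
    have h₁ := succ_mul_multichoose_succ_eq_mul_succ_multichoose l m
    have h₂ := succ_mul_multichoose_succ (l + 1) m
    rw [Finset.sum_range_succ, ih]
    push_cast at h₂ ⊢
    field_simp
    linear_combination (l + 1 : ℝ) * h₁ - (l : ℝ) * h₂

lemma sum_mul_sub_one_mul_multichoose :
    ∑ j ∈ Finset.range (m + 1), (j * (j - 1) * l.multichoose j : ℝ)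
      = m * (m - 1) * l / (l + 2) * (l + 1).multichoose m := by
  have h₀ : (l + 2 : ℝ) ≠ 0 := by positivity
  induction m with
  | zero => simp
  | succ m ih =>
    have h₁ := succ_mul_multichoose_succ_eq_mul_succ_multichoose l m
    have h₂ := succ_mul_multichoose_succ (l + 1) m
    rw [Finset.sum_range_succ, ih]
    push_cast at h₂ ⊢
    field_simp
    linear_combination (-(l : ℝ) * m) * h₂ + ((l : ℝ) + 2) * m * h₁

end Multichoose

lemma ncard_eq_sum_ncard_fiber {α β : Type*} {A : Set α} (hA : A.Finite)
    {f : α → β} {t : Finset β} (h : ∀ a ∈ A, f a ∈ t) :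
    A.ncard = ∑ b ∈ t, {a ∈ A | f a = b}.ncard := by
  classical
  lift A to Finset α using hA
  rw [ncard_coe_finset, Finset.card_eq_sum_card_fiberwise (f := f) (t := t) fun a ha => h a ha]
  exact Finset.sum_congr rfl fun b _ => by rw [← ncard_coe_finset, Finset.coe_filter]; rfl

lemma ncard_bridges_first_step {c T₀ T₁ w : ℤ} {φ : ℤ → ℤ → Prop} (hT : T₀ < T₁) (m : ℕ)
    (hφ : φ T₀ (w - m)) :
    (bridges c T₀ T₁ (w - m) w φ).ncard
      = ∑ j ∈ Finset.range (m + 1), (bridges c (T₀ + 1) T₁ (w - j) w φ).ncard := by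
  have hmem : T₀ + 1 ∈ Icc T₀ T₁ := ⟨by omega, by omega⟩
  rw [ncard_eq_sum_ncard_fiber bridges_finite (f := fun Q => (w - Q (T₀ + 1)).toNat)
    (t := Finset.range (m + 1)) fun Q hQ => ?_]
  · refine Finset.sum_congr rfl fun j hj => ?_
    have hj : j ≤ m := Finset.mem_range_succ_iff.1 hj
    have hfiber : {Q ∈ bridges c T₀ T₁ (w - m) w φ | (w - Q (T₀ + 1)).toNat = j}
        = {Q ∈ bridges c T₀ T₁ (w - m) w φ | Q (T₀ + 1) = w - j} := by
      ext Q
      refine and_congr_right fun hQ => ?_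
      have := mem_Icc_of_mem_bridges hQ hmem
      grind
    rw [hfiber, ncard_bridges_through (by omega) hT]
    by_cases hj' : φ (T₀ + 1) (w - j)
    · rw [ncard_bridges_succ (by omega) hφ hj', one_mul]
    · rw [bridges_eq_empty_of_not_start (T₀ := T₀ + 1) hT hj', ncard_empty, mul_zero]
  · have := mem_Icc_of_mem_bridges hQ hmem
    grind

lemma ncard_bridges_top (c T w : ℤ) (l m : ℕ) :
    (bridges c (T - l) T (w - m) w ⊤).ncard = l.multichoose m := by
  induction l generalizing m with
  | zero =>
    rw [Nat.cast_zero, sub_zero]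
    rcases m with _ | m
    · rw [Nat.cast_zero, sub_zero, ncard_bridges_self trivial, Nat.multichoose_zero_right]
    · rw [Nat.multichoose_zero_succ, ncard_eq_zero bridges_finite]
      refine eq_empty_of_forall_notMem fun Q ⟨_, hz, hw, _, _⟩ => ?_
      omega
  | succ l ih =>
    rw [ncard_bridges_first_step (by omega) _ trivial, ← sum_range_multichoose]
    refine Finset.sum_congr rfl fun j _ => ?_
    rw [← ih j]
    congr 2
    omega

/-! ### The maximal inequality -/

/-- The pointwise constraint of staying at distance less than `D` from the curve `lam`. -/
def tube (lam : ℤ → ℝ) (D : ℝ) (s v : ℤ) : Prop :=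
  |v - lam s| < D

/-- An upper bound, up to a constant, for the variance per step of a random bridge of slope `q`;
the steps of such a bridge are close to geometric variables of variance `q ^ 2 + q`. -/
def varianceBound (q : ℝ) : ℝ :=
  2 * q ^ 2 + 2 * q + 1

lemma varianceBound_pos (q : ℝ) : 0 < varianceBound q := by
  unfold varianceBound
  nlinarith [sq_nonneg (2 * q + 1)]

lemma varianceBound_step {l : ℝ} (hl : 0 ≤ l) (q m : ℝ) :
    m * (m - 1) * l / (l + 2) + (1 - 2 * q * l) * (m * l / (l + 1)) + q ^ 2 * l ^ 2
        + varianceBound q * l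
      ≤ (m - q * (l + 1)) ^ 2 + varianceBound q * (l + 1) := by
  obtain ⟨b, rfl⟩ : ∃ b, m = (q + b) * (l + 1) := ⟨m / (l + 1) - q, by field_simp; ring⟩
  have hdiff : ((q + b) * (l + 1) - q * (l + 1)) ^ 2 + varianceBound q * (l + 1)
      - ((q + b) * (l + 1) * ((q + b) * (l + 1) - 1) * l / (l + 2)
        + (1 - 2 * q * l) * ((q + b) * (l + 1) * l / (l + 1)) + q ^ 2 * l ^ 2
        + varianceBound q * l)
      = (l * (b - (2 * q + 1) / 2) ^ 2 + (2 * l ^ 2 + 3 * l + 2) * b ^ 2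
        + (2 * varianceBound q + 3 / 4 * l)) / (l + 2) := by
    unfold varianceBound
    field_simp
    ring
  have hpos := varianceBound_pos q
  rw [← sub_nonneg, hdiff]
  positivity

lemma sum_weight_ge (q D : ℝ) (l m : ℕ) :
    (D ^ 2 - (m - q * (l + 1)) ^ 2 - varianceBound q * (l + 1)) * (l + 1).multichoose m
      ≤ ∑ j ∈ Finset.range (m + 1),
        (D ^ 2 - (j - q * l) ^ 2 - varianceBound q * l) * l.multichoose j := by
  have hsum : (∑ j ∈ Finset.range (m + 1), l.multichoose j : ℝ) = (l + 1).multichoose m := by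
    exact_mod_cast sum_range_multichoose l m
  have hexpand : ∑ j ∈ Finset.range (m + 1),
        (D ^ 2 - (j - q * l) ^ 2 - varianceBound q * l) * l.multichoose j
      = (D ^ 2 - (q ^ 2 * l ^ 2 + varianceBound q * l)) * (l + 1).multichoose m
        - m * (m - 1) * l / (l + 2) * (l + 1).multichoose m
        - (1 - 2 * q * l) * (m * l / (l + 1) * (l + 1).multichoose m) := by
    rw [← sum_mul_sub_one_mul_multichoose, ← sum_mul_multichoose, ← hsum, Finset.mul_sum,
      Finset.mul_sum, ← Finset.sum_sub_distrib, ← Finset.sum_sub_distrib]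
    exact Finset.sum_congr rfl fun j _ => by ring
  rw [hexpand]
  linarith [mul_le_mul_of_nonneg_right (varianceBound_step l.cast_nonneg q m)
    ((l + 1).multichoose m).cast_nonneg]

/-- The weight `D² - (m - q l)² - varianceBound q * l` of a bridge with `l` steps and height `m` to
go plays the role of a submartingale: its average over the first step is at least its value, and it
is nonpositive as soon as the bridge has left the tube. -/
lemma ncard_bridges_tube_ge {q D : ℝ} (hD : 0 < D) (c T w : ℤ) (l m : ℕ) :
    (D ^ 2 - (m - q * l) ^ 2 - varianceBound q * l) * l.multichoose m
      ≤ D ^ 2 * (bridges c (T - l) T (w - m) w (tube (fun s => w - q * (T - s)) D)).ncard := by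
  induction l generalizing m with
  | zero =>
    rcases m with _ | m
    · have hstart : tube (fun s => w - q * (T - s)) D T w := by simpa [tube] using hD
      simp [ncard_bridges_self hstart]
    · simp only [Nat.multichoose_zero_succ, Nat.cast_zero, mul_zero]
      positivity
  | succ l ih =>
    have hstart : tube (fun s => w - q * (T - s)) D (T - (l + 1 : ℕ)) (w - m)
        ↔ |m - q * (l + 1)| < D := by
      rw [tube, ← abs_neg]
      push_cast
      ring_nf
    by_cases h : |m - q * (l + 1)| < D
    · rw [ncard_bridges_first_step (by omega) _ (hstart.2 h),
        show T - ((l + 1 : ℕ) : ℤ) + 1 = T - l by omega]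
      push_cast
      rw [Finset.mul_sum]
      exact (sum_weight_ge q D l m).trans (Finset.sum_le_sum fun j _ => ih j)
    · have hout : D ^ 2 ≤ (m - q * (l + 1)) ^ 2 :=
        sq_le_sq.2 ((abs_of_pos hD).trans_le (not_lt.1 h))
      have hpos := varianceBound_pos q
      push_cast
      refine (mul_nonpos_of_nonpos_of_nonneg ?_ (Nat.cast_nonneg _)).trans (by positivity)
      have : 0 ≤ varianceBound q * (l + 1) := by positivity
      linarith

/-- The affine function with value `z` at time `T₀` and `w` at time `T₁`. -/
noncomputable def chord (T₀ T₁ z w s : ℝ) : ℝ :=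
  z + (w - z) * ((s - T₀) / (T₁ - T₀))

lemma ncard_bridges_chord_ge {T₀ T₁ z w : ℤ} {D : ℝ} (hT : T₀ < T₁) (hzw : z ≤ w) (hD : 0 < D)
    (c : ℤ) :
    (D ^ 2 - varianceBound ((w - z) / (T₁ - T₀)) * (T₁ - T₀)) * (bridges c T₀ T₁ z w ⊤).ncard
      ≤ D ^ 2 * (bridges c T₀ T₁ z w (tube (fun s => chord T₀ T₁ z w s) D)).ncard := by
  have hT' : (T₁ - T₀ : ℝ) ≠ 0 := sub_ne_zero.2 (Int.cast_injective.ne hT.ne')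
  obtain ⟨l, rfl⟩ : ∃ l : ℕ, T₀ = T₁ - l := ⟨(T₁ - T₀).toNat, by omega⟩
  obtain ⟨m, rfl⟩ : ∃ m : ℕ, z = w - m := ⟨(w - z).toNat, by omega⟩
  have h := ncard_bridges_tube_ge (q := (w - (w - m : ℤ)) / (T₁ - (T₁ - l : ℤ))) hD c T₁ w l m
  have hchord (s : ℤ) : chord (T₁ - l : ℤ) T₁ (w - m : ℤ) w s
      = w - (w - (w - m : ℤ)) / (T₁ - (T₁ - l : ℤ)) * (T₁ - s) := by
    rw [chord]
    field_simp
    ring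
  simp only [hchord, ncard_bridges_top]
  convert h using 2
  push_cast at hT' ⊢
  field_simp
  ring

/-! ### Interlacing ensembles -/

section Ensembles

variable {k : ℕ} {T₀ T₁ : ℤ} {x y : Fin k → ℤ} {f g : ℤ → EReal} {Q : Fin k → ℤ → ℤ}

lemma monotone_coe_EReal : Monotone fun v : ℤ => ((v : ℝ) : EReal) :=
  EReal.coe_strictMono.monotone.comp Int.cast_mono

lemma IncrPath.monotone {L : ℤ → ℤ} (h : IncrPath T₀ T₁ L) : Monotone L := by
  obtain ⟨hstep, hleft, hright⟩ := h
  refine monotone_int_of_le_succ fun j => ?_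
  grind

namespace OmegaInter

lemma monotone (hQ : Q ∈ OmegaInter T₀ T₁ x y f g) (i : Fin k) : Monotone (Q i) :=
  (hQ.1 i).monotone

lemma eq_left (hQ : Q ∈ OmegaInter T₀ T₁ x y f g) (i : Fin k) {s : ℤ} (hs : s ≤ T₀) :
    Q i s = x i :=
  ((hQ.1 i).2.1 s hs).trans (hQ.2.1 i)

lemma eq_right (hQ : Q ∈ OmegaInter T₀ T₁ x y f g) (i : Fin k) {s : ℤ} (hs : T₁ ≤ s) :
    Q i s = y i :=
  ((hQ.1 i).2.2 s hs).trans (hQ.2.2.1 i)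

lemma le_apply (hQ : Q ∈ OmegaInter T₀ T₁ x y f g) (i : Fin k) (s : ℤ) : x i ≤ Q i s := by
  rw [← eq_left hQ i (min_le_right s T₀)]
  exact monotone hQ i (min_le_left s T₀)

lemma apply_le (hQ : Q ∈ OmegaInter T₀ T₁ x y f g) (i : Fin k) (s : ℤ) : Q i s ≤ y i := by
  rw [← eq_right hQ i (le_max_right s T₁)]
  exact monotone hQ i (le_max_left s T₁)

protected lemma finite : (OmegaInter T₀ T₁ x y f g).Finite := by
  refine (Finite.pi' fun i => ?_).subset fun Q hQ i => mem_image_of_mem (fun Q => Q i) hQ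
  refine finite_of_forall_mem_Icc (T₀ := T₀) (T₁ := T₁) (lo := x i) (hi := y i) ?_ ?_
  · rintro _ ⟨Q, hQ, rfl⟩ s -
    exact ⟨le_apply hQ i s, apply_le hQ i s⟩
  · rintro _ ⟨Q, hQ, rfl⟩ _ ⟨Q', hQ', rfl⟩ h
    ext s
    rcases le_total s T₀ with hs | hs
    · exact (eq_left hQ i hs).trans (eq_left hQ' i hs).symm
    rcases le_total T₁ s with hs' | hs'
    · exact (eq_right hQ i hs').trans (eq_right hQ' i hs').symm
    · exact h ⟨hs, hs'⟩

lemma finite_sep (G : (Fin k → ℤ → ℤ) → Prop) : {Q ∈ OmegaInter T₀ T₁ x y f g | G Q}.Finite :=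
  OmegaInter.finite.subset (sep_subset _ _)

lemma antitone_apply (hx : Antitone x) (hQ : Q ∈ OmegaInter T₀ T₁ x y f g) {s : ℤ}
    (hs : s ≤ T₁) : Antitone fun i => Q i s := by
  rcases le_or_gt s T₀ with hs₀ | hs₀
  · simpa only [eq_left hQ _ hs₀] using hx
  rcases k with _ | k
  · exact fun i => i.elim0
  refine Fin.antitone_iff_succ_le.2 fun i => ?_
  exact ((hQ.2.2.2 s hs₀ hs).2.1 i.castSucc i.succ (by simp)).trans
    (monotone hQ i.castSucc (Int.sub_le_self s zero_le_one))

lemma add_inf_mem {a b : Fin k → ℤ → ℤ} (ha : a ∈ OmegaInter T₀ T₁ x y f g)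
    (hb : b ∈ OmegaInter T₀ T₁ x y f g) (c : ℕ) : (a + c) ⊓ b ∈ OmegaInter T₀ T₁ x y f g := by
  obtain ⟨hainc, ha₀, ha₁, hainter⟩ := ha
  obtain ⟨hbinc, hb₀, hb₁, hbinter⟩ := hb
  refine ⟨fun i => ⟨fun j hj hj' => ?_, fun s hs => ?_, fun s hs => ?_⟩, fun i => ?_, fun i => ?_,
    fun r hr hr' => ⟨fun i hi => ?_, fun i j hij => ?_, fun i hi => ?_⟩⟩ <;>
    simp only [Pi.inf_apply, Pi.add_apply, Pi.natCast_apply]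
  · gcongr
    exacts [(hainc i).1 j hj hj', (hbinc i).1 j hj hj']
  · rw [(hainc i).2.1 s hs, (hbinc i).2.1 s hs]
  · rw [(hainc i).2.2 s hs, (hbinc i).2.2 s hs]
  · rw [ha₀, hb₀]
    omega
  · rw [ha₁, hb₁]
    omega
  · exact (monotone_coe_EReal inf_le_right).trans ((hbinter r hr hr').1 i hi)
  · gcongr
    exacts [(hainter r hr hr').2.1 i j hij, (hbinter r hr hr').2.1 i j hij]
  · rw [monotone_coe_EReal.map_inf]
    exact le_inf (((hainter r hr hr').2.2 i hi).trans (monotone_coe_EReal (by omega)))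
      ((hbinter r hr hr').2.2 i hi)

lemma sup_sub_mem {a b : Fin k → ℤ → ℤ} (ha : a ∈ OmegaInter T₀ T₁ x y f g)
    (hb : b ∈ OmegaInter T₀ T₁ x y f g) (c : ℕ) : a ⊔ (b - c) ∈ OmegaInter T₀ T₁ x y f g := by
  obtain ⟨hainc, ha₀, ha₁, hainter⟩ := ha
  obtain ⟨hbinc, hb₀, hb₁, hbinter⟩ := hb
  refine ⟨fun i => ⟨fun j hj hj' => ?_, fun s hs => ?_, fun s hs => ?_⟩, fun i => ?_, fun i => ?_,
    fun r hr hr' => ⟨fun i hi => ?_, fun i j hij => ?_, fun i hi => ?_⟩⟩ <;>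
    simp only [Pi.sup_apply, Pi.sub_apply, Pi.natCast_apply]
  · gcongr
    exacts [(hainc i).1 j hj hj', (hbinc i).1 j hj hj']
  · rw [(hainc i).2.1 s hs, (hbinc i).2.1 s hs]
  · rw [(hainc i).2.2 s hs, (hbinc i).2.2 s hs]
  · rw [ha₀, hb₀]
    omega
  · rw [ha₁, hb₁]
    omega
  · rw [monotone_coe_EReal.map_sup]
    exact sup_le ((hainter r hr hr').1 i hi)
      ((monotone_coe_EReal (by omega)).trans ((hbinter r hr hr').1 i hi))
  · gcongr
    exacts [(hainter r hr hr').2.1 i j hij, (hbinter r hr hr').2.1 i j hij]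
  · exact ((hainter r hr hr').2.2 i hi).trans (monotone_coe_EReal le_sup_left)

/-- The survival function of a coordinate is log-concave: shift one of two ensembles by `c` before
taking lattice operations. -/
lemma ncard_mul_ncard_le_sq (i : Fin k) (t v : ℤ) (c : ℕ) :
    {Q ∈ OmegaInter T₀ T₁ x y f g | v ≤ Q i t}.ncard
        * {Q ∈ OmegaInter T₀ T₁ x y f g | v + 2 * c ≤ Q i t}.ncard
      ≤ {Q ∈ OmegaInter T₀ T₁ x y f g | v + c ≤ Q i t}.ncard ^ 2 := by
  have hinj : Function.Injective fun Q : Fin k → ℤ → ℤ => Q + c := add_left_injective _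
  have hfin := finite_sep (T₀ := T₀) (T₁ := T₁) (x := x) (y := y) (f := f) (g := g)
  rw [sq, ← ncard_image_of_injective {Q ∈ OmegaInter T₀ T₁ x y f g | v ≤ Q i t} hinj]
  nth_rw 4 [← ncard_image_of_injective _ hinj]
  refine ncard_mul_ncard_le_of_inf_mem_of_sup_mem (hfin _) ((hfin _).image _) ?_ ?_
  · rintro _ ⟨a, ⟨ha, hat⟩, rfl⟩ b ⟨hb, hbt⟩
    refine ⟨add_inf_mem ha hb c, ?_⟩
    simp only [Pi.inf_apply, Pi.add_apply, Pi.natCast_apply]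
    omega
  · rintro _ ⟨a, ⟨ha, -⟩, rfl⟩ b ⟨hb, hbt⟩
    refine ⟨a ⊔ (b - c), ⟨sup_sub_mem ha hb c, ?_⟩, ?_⟩
    · simp only [Pi.sup_apply, Pi.sub_apply, Pi.natCast_apply]
      omega
    · simp only [sup_add, sub_add_cancel]

end OmegaInter

end Ensembles

/-! ### Comparison with a stack of bridges -/

section Stack

variable {k : ℕ} {c S₀ S₁ T₀ T₁ z w d : ℤ} {x y : Fin k → ℤ} {g : ℤ → EReal}
  {e : Fin k} {a b : Fin k → ℤ → ℤ}

/-- Interlacing ensembles which are unconstrained above. -/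
abbrev ensemble (S₀ S₁ : ℤ) (x y : Fin k → ℤ) (g : ℤ → EReal) : Set (Fin k → ℤ → ℤ) :=
  OmegaInter S₀ S₁ x y (fun _ => ⊤) g

/-- Interlacing tuples of bridges, each one starting and ending at distance `d` below the
previous one. -/
def bridgeStack (k : ℕ) (c T₀ T₁ z w d : ℤ) : Set (Fin k → ℤ → ℤ) :=
  {Q | (∀ i : Fin k, Q i ∈ bridges c T₀ T₁ (z - (i : ℕ) * d) (w - (i : ℕ) * d) ⊤) ∧
    ∀ r, T₀ < r → r ≤ T₁ → ∀ i j : Fin k, (j : ℕ) = i + 1 → Q j r ≤ Q i (r - 1)}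

lemma bridgeStack_finite : (bridgeStack k c T₀ T₁ z w d).Finite :=
  (Finite.pi' fun _ => bridges_finite).subset fun _ hQ => hQ.1

lemma apply_le_apply_of_notMem_Ioo (hx : Antitone x) (he : IsTop e) (hd : 0 ≤ d)
    (hT : T₀ ≤ T₁) (hS₁ : T₁ ≤ S₁) (ha : a ∈ bridgeStack k (x e) T₀ T₁ z w d)
    (hb : b ∈ ensemble S₀ S₁ x y g) (hz : z ≤ b e T₀) (hw : w ≤ b e T₁) (i : Fin k) {s : ℤ}
    (hs : s ∉ Ioo T₀ T₁) : a i s ≤ b i s := by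
  obtain ⟨-, haz, haw, hac, -⟩ := ha.1 i
  have hid : 0 ≤ (i : ℕ) * d := by positivity
  by_cases hs' : s ∈ Icc T₀ T₁
  · obtain rfl | rfl : s = T₀ ∨ s = T₁ := by grind
    · have := OmegaInter.antitone_apply hx hb (hT.trans hS₁) (he i)
      grind
    · have := OmegaInter.antitone_apply hx hb hS₁ (he i)
      grind
  · rw [hac s hs']
    exact (hx (he i)).trans (OmegaInter.le_apply hb i s)

lemma inf_mem_bridgeStack (hS₀ : S₀ ≤ T₀) (hS₁ : T₁ ≤ S₁)
    (ha : a ∈ bridgeStack k c T₀ T₁ z w d) (hb : b ∈ ensemble S₀ S₁ x y g)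
    (hab : ∀ i, ∀ s ∉ Ioo T₀ T₁, a i s ≤ b i s) : a ⊓ b ∈ bridgeStack k c T₀ T₁ z w d := by
  refine ⟨fun i => ?_, fun r hr hr' i j hij => ?_⟩
  · obtain ⟨hmono, haz, haw, hac, -⟩ := ha.1 i
    have hbi := OmegaInter.monotone hb i
    refine ⟨fun s hs s' hs' h => inf_le_inf (hmono hs hs' h) (hbi h), ?_, ?_, fun s hs => ?_,
      fun _ _ => trivial⟩
    · exact (inf_eq_left.2 (hab i T₀ (by simp))).trans haz
    · exact (inf_eq_left.2 (hab i T₁ (by simp))).trans haw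
    · exact (inf_eq_left.2 (hab i s fun h => hs (Ioo_subset_Icc_self h))).trans (hac s hs)
  · exact inf_le_inf (ha.2 r hr hr' i j hij)
      ((hb.2.2.2 r (hS₀.trans_lt hr) (hr'.trans hS₁)).2.1 i j hij)

lemma sup_mem_ensemble (hS₀ : S₀ ≤ T₀) (hS₁ : T₁ ≤ S₁)
    (ha : a ∈ bridgeStack k c T₀ T₁ z w d) (hb : b ∈ ensemble S₀ S₁ x y g)
    (hab : ∀ i, ∀ s ∉ Ioo T₀ T₁, a i s ≤ b i s) : a ⊔ b ∈ ensemble S₀ S₁ x y g := by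
  obtain ⟨hinc, hb₀, hb₁, hinter⟩ := hb
  have hout (i : Fin k) {s : ℤ} (hs : s ∉ Ioo T₀ T₁) : (a ⊔ b) i s = b i s :=
    sup_eq_right.2 (hab i s hs)
  refine ⟨fun i => ⟨fun j hj hj' => ?_, fun s hs => ?_, fun s hs => ?_⟩, fun i => ?_, fun i => ?_,
    fun r hr hr' => ⟨fun i _ => le_top, fun i j hij => ?_, fun i hi => ?_⟩⟩
  · by_cases h : T₀ ≤ j ∧ j < T₁
    · exact sup_le_sup ((ha.1 i).1 (by grind) (by grind) (by omega)) ((hinc i).1 j hj hj')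
    · rw [hout i (by grind), hout i (by grind)]
      exact (hinc i).1 j hj hj'
  · rw [hout i (by grind), hout i (by grind), (hinc i).2.1 s hs]
  · rw [hout i (by grind), hout i (by grind), (hinc i).2.2 s hs]
  · rw [hout i (by grind), hb₀]
  · rw [hout i (by grind), hb₁]
  · by_cases h : T₀ < r ∧ r ≤ T₁
    · exact sup_le_sup (ha.2 r h.1 h.2 i j hij) ((hinter r hr hr').2.1 i j hij)
    · rw [hout i (by grind), hout j (by grind)]
      exact (hinter r hr hr').2.1 i j hij
  · exact ((hinter r hr hr').2.2 i hi).trans (monotone_coe_EReal le_sup_right)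

/-- Stochastic domination of a stack of bridges by an ensemble. -/
lemma ProportionGE.of_bridgeStack {θ : ℝ} {G : (Fin k → ℤ → ℤ) → Prop} (hx : Antitone x)
    (he : IsTop e) (hd : 0 ≤ d) (hS₀ : S₀ ≤ T₀) (hT : T₀ ≤ T₁) (hS₁ : T₁ ≤ S₁)
    (hne : (bridgeStack k (x e) T₀ T₁ z w d).Nonempty) (hG : Monotone G)
    (h : ProportionGE θ (bridgeStack k (x e) T₀ T₁ z w d) G) :
    ProportionGE θ {Q ∈ ensemble S₀ S₁ x y g | z ≤ Q e T₀ ∧ w ≤ Q e T₁} G := by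
  set A := bridgeStack k (x e) T₀ T₁ z w d
  set B := {Q ∈ ensemble S₀ S₁ x y g | z ≤ Q e T₀ ∧ w ≤ Q e T₁}
  have hpos : (0 : ℝ) < A.ncard := Nat.cast_pos.2 ((ncard_pos bridgeStack_finite).2 hne)
  have hlattice : {Q ∈ A | G Q}.ncard * B.ncard ≤ A.ncard * {Q ∈ B | G Q}.ncard := by
    refine ncard_mul_ncard_le_of_inf_mem_of_sup_mem bridgeStack_finite
      ((OmegaInter.finite_sep _).subset (sep_subset _ _)) ?_ ?_ <;>
    · rintro a ⟨ha, hGa⟩ b ⟨hb, hz, hw⟩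
      have hab : ∀ i, ∀ s ∉ Ioo T₀ T₁, a i s ≤ b i s := fun i s =>
        apply_le_apply_of_notMem_Ioo hx he hd hT hS₁ ha hb hz hw i
      first
      | exact inf_mem_bridgeStack hS₀ hS₁ ha hb hab
      | exact ⟨⟨sup_mem_ensemble hS₀ hS₁ ha hb hab, le_sup_of_le_right hz,
          le_sup_of_le_right hw⟩, hG le_sup_left hGa⟩
  refine le_of_mul_le_mul_left ?_ hpos
  calc A.ncard * (θ * B.ncard) = θ * A.ncard * B.ncard := by ring
    _ ≤ {Q ∈ A | G Q}.ncard * B.ncard := mul_le_mul_of_nonneg_right h (Nat.cast_nonneg _)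
    _ ≤ A.ncard * {Q ∈ B | G Q}.ncard := by exact_mod_cast hlattice

end Stack

section Tubes

variable {k : ℕ} {c S₀ S₁ T₀ T₁ z w d t v : ℤ} {x y : Fin k → ℤ} {g : ℤ → EReal} {e : Fin k}
  {lam : ℤ → ℝ} {D θ η : ℝ}

lemma ncard_bridges_top_pos (c : ℤ) (hT : T₀ < T₁) (hzw : z ≤ w) :
    0 < (bridges c T₀ T₁ z w ⊤).ncard := by
  obtain ⟨l, rfl⟩ : ∃ l : ℕ, T₀ = T₁ - l := ⟨(T₁ - T₀).toNat, by omega⟩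
  obtain ⟨m, rfl⟩ : ∃ m : ℕ, z = w - m := ⟨(w - z).toNat, by omega⟩
  rw [ncard_bridges_top, Nat.multichoose_eq]
  exact Nat.choose_pos (by omega)

lemma bridges_sub_tube_subset_bridgeStack
    (hd : ∀ r, T₀ < r → r ≤ T₁ → lam r - lam (r - 1) + 2 * D ≤ d) {Q : Fin k → ℤ → ℤ}
    (hQ : ∀ i : Fin k, Q i ∈ bridges c T₀ T₁ (z - (i : ℕ) * d) (w - (i : ℕ) * d)
      fun s v => tube lam D s (v + (i : ℕ) * d)) :
    Q ∈ bridgeStack k c T₀ T₁ z w d := by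
  refine ⟨fun i => bridges_mono (fun _ _ _ _ => trivial) (hQ i), fun r hr hr' i j hij => ?_⟩
  have hi := abs_lt.1 ((hQ i).2.2.2.2 (r - 1) ⟨by omega, by omega⟩)
  have hj := abs_lt.1 ((hQ j).2.2.2.2 r ⟨by omega, by omega⟩)
  have hij' : ((j : ℕ) : ℝ) = (i : ℕ) + 1 := by exact_mod_cast hij
  push_cast [hij'] at hi hj
  suffices h : (Q j r : ℝ) ≤ Q i (r - 1) by exact_mod_cast h
  linarith [hd r hr hr', hi.1, hj.2]

/-- The bridges of a stack interlace as soon as each one stays in its own translate of the tube, and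
independent bridges do so with probability at least `θ ^ k`. -/
lemma pow_mul_prod_ncard_bridges_le_ncard_bridgeStack (hθ : 0 ≤ θ) (ht : t ∈ Icc T₀ T₁)
    (htube : ∀ c, θ * (bridges c T₀ T₁ z w ⊤).ncard ≤ (bridges c T₀ T₁ z w (tube lam D)).ncard)
    (hd : ∀ r, T₀ < r → r ≤ T₁ → lam r - lam (r - 1) + 2 * D ≤ d)
    (hv : v ≤ lam t - (e : ℕ) * d - D) (c : ℤ) :
    θ ^ k * ∏ i : Fin k, ((bridges c T₀ T₁ (z - (i : ℕ) * d) (w - (i : ℕ) * d) ⊤).ncard : ℝ)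
      ≤ {Q ∈ bridgeStack k c T₀ T₁ z w d | v ≤ Q e t}.ncard := by
  let E (i : Fin k) := bridges c T₀ T₁ (z - (i : ℕ) * d) (w - (i : ℕ) * d)
    fun s v => tube lam D s (v + (i : ℕ) * d)
  have hrow (i : Fin k) :
      θ * (bridges c T₀ T₁ (z - (i : ℕ) * d) (w - (i : ℕ) * d) ⊤).ncard ≤ (E i).ncard := by
    calc θ * (bridges c T₀ T₁ (z - (i : ℕ) * d) (w - (i : ℕ) * d) ⊤).ncard
        = θ * (bridges (c + (i : ℕ) * d) T₀ T₁ z w ⊤).ncard := by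
          rw [← ncard_bridges_sub]
          rfl
      _ ≤ (bridges (c + (i : ℕ) * d) T₀ T₁ z w (tube lam D)).ncard := htube _
      _ = (E i).ncard := by rw [← ncard_bridges_sub]
  have hsub : univ.pi E ⊆ {Q ∈ bridgeStack k c T₀ T₁ z w d | v ≤ Q e t} := by
    refine fun Q hQ => ⟨bridges_sub_tube_subset_bridgeStack hd fun i => hQ i trivial, ?_⟩
    have := (abs_lt.1 ((hQ e trivial).2.2.2.2 t ht)).1
    push_cast at this
    suffices h : (v : ℝ) ≤ Q e t by exact_mod_cast h
    linarith
  calc θ ^ k * ∏ i : Fin k, ((bridges c T₀ T₁ (z - (i : ℕ) * d) (w - (i : ℕ) * d) ⊤).ncard : ℝ)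
      = ∏ i : Fin k, θ * (bridges c T₀ T₁ (z - (i : ℕ) * d) (w - (i : ℕ) * d) ⊤).ncard := by
        rw [Finset.prod_mul_distrib, Finset.prod_const, Finset.card_fin]
    _ ≤ ∏ i, ((E i).ncard : ℝ) := Finset.prod_le_prod (fun i _ => by positivity) fun i _ => hrow i
    _ = (univ.pi E).ncard := by
        exact_mod_cast ((Nat.card_congr (Equiv.Set.univPi E)).trans Nat.card_pi).symm
    _ ≤ {Q ∈ bridgeStack k c T₀ T₁ z w d | v ≤ Q e t}.ncard :=
        Nat.cast_le.2 (ncard_le_ncard hsub (bridgeStack_finite.subset (sep_subset _ _)))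

lemma ProportionGE.of_tube (hx : Antitone x) (he : IsTop e) (hθ : 0 < θ)
    (hS₀ : S₀ ≤ T₀) (hT : T₀ < T₁) (hS₁ : T₁ ≤ S₁) (hzw : z ≤ w) (ht : t ∈ Icc T₀ T₁) (hd₀ : 0 ≤ d)
    (htube : ∀ c, θ * (bridges c T₀ T₁ z w ⊤).ncard ≤ (bridges c T₀ T₁ z w (tube lam D)).ncard)
    (hd : ∀ r, T₀ < r → r ≤ T₁ → lam r - lam (r - 1) + 2 * D ≤ d)
    (hv : v ≤ lam t - (e : ℕ) * d - D) :
    ProportionGE (θ ^ k) {Q ∈ ensemble S₀ S₁ x y g | z ≤ Q e T₀ ∧ w ≤ Q e T₁}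
      fun Q => v ≤ Q e t := by
  have hprod := pow_mul_prod_ncard_bridges_le_ncard_bridgeStack hθ.le ht htube hd hv (x e)
  refine ProportionGE.of_bridgeStack hx he hd₀ hS₀ hT.le hS₁ ?_
    (fun a b hab h => h.trans (hab e t)) (le_trans ?_ hprod)
  · have hpos : (0 : ℝ) < ∏ i : Fin k,
        ((bridges (x e) T₀ T₁ (z - (i : ℕ) * d) (w - (i : ℕ) * d) ⊤).ncard : ℝ) :=
      Finset.prod_pos fun i _ => Nat.cast_pos.2 (ncard_bridges_top_pos _ hT (by omega))
    have hne : {Q ∈ bridgeStack k (x e) T₀ T₁ z w d | v ≤ Q e t}.ncard ≠ 0 :=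
      (Nat.cast_pos.1 ((mul_pos (pow_pos hθ k) hpos).trans_le hprod)).ne'
    exact (nonempty_of_ncard_ne_zero hne).mono (sep_subset _ _)
  · have hsub : bridgeStack k (x e) T₀ T₁ z w d ⊆ univ.pi fun i : Fin k =>
        bridges (x e) T₀ T₁ (z - (i : ℕ) * d) (w - (i : ℕ) * d) ⊤ := fun Q hQ i _ => hQ.1 i
    refine mul_le_mul_of_nonneg_left ?_ (by positivity)
    exact_mod_cast (ncard_le_ncard hsub (Finite.pi fun _ => bridges_finite)).trans_eq
      ((Nat.card_congr (Equiv.Set.univPi _)).trans Nat.card_pi)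

/-- Each of the `k` bridges of the stack leaves a tube around its chord with probability at most
`η / k`. -/
lemma ProportionGE.of_chord (hx : Antitone x) (he : IsTop e) (hη : η < 1) (hS₀ : S₀ ≤ T₀)
    (hT : T₀ < T₁) (hS₁ : T₁ ≤ S₁) (hzw : z ≤ w) (ht : t ∈ Icc T₀ T₁) (hD : 0 < D)
    (hvar : varianceBound ((w - z) / (T₁ - T₀)) * (T₁ - T₀) ≤ η / k * D ^ 2)
    (hv : v ≤ chord T₀ T₁ z w t - k * (2 * D + (w - z) / (T₁ - T₀) + 1) - D) :
    ProportionGE (1 - η) {Q ∈ ensemble S₀ S₁ x y g | z ≤ Q e T₀ ∧ w ≤ Q e T₁}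
      fun Q => v ≤ Q e t := by
  set q : ℝ := (w - z) / (T₁ - T₀) with hq
  have hk : (1 : ℝ) ≤ k := by exact_mod_cast Fin.pos e
  have hT' : (0 : ℝ) < T₁ - T₀ := sub_pos.2 (Int.cast_lt.2 hT)
  have hq₀ : 0 ≤ q := div_nonneg (sub_nonneg.2 (Int.cast_le.2 hzw)) hT'.le
  have hηk : η / k < 1 := by
    rw [div_lt_one (by linarith)]
    linarith
  have htube (c : ℤ) : (1 - η / k) * (bridges c T₀ T₁ z w ⊤).ncard
      ≤ (bridges c T₀ T₁ z w (tube (fun s => chord T₀ T₁ z w s) D)).ncard := by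
    refine le_of_mul_le_mul_left ((le_trans ?_ (ncard_bridges_chord_ge hT hzw hD c))) (pow_pos hD 2)
    rw [← mul_assoc]
    exact mul_le_mul_of_nonneg_right (by linarith) (Nat.cast_nonneg _)
  refine (ProportionGE.of_tube (d := ⌈2 * D + q⌉) hx he (sub_pos.2 hηk) hS₀ hT hS₁ hzw ht
    (Int.ceil_nonneg (by positivity)) htube (fun r _ _ => ?_) ?_).of_le ?_
  · refine le_trans (le_of_eq ?_) (Int.le_ceil _)
    rw [chord, chord, hq]
    push_cast
    field_simp
    ring
  · have hceil := (Int.ceil_lt_add_one (2 * D + q)).le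
    have hek : ((e : ℕ) : ℝ) ≤ k := by exact_mod_cast e.is_lt.le
    have : ((e : ℕ) : ℝ) * ⌈2 * D + q⌉ ≤ k * (2 * D + q + 1) := by gcongr
    linarith
  · have hbernoulli := one_add_mul_le_pow (a := -(η / k)) (by linarith) k
    rwa [mul_neg, mul_div_cancel₀ _ (by linarith), ← sub_eq_add_neg, ← sub_eq_add_neg] at hbernoulli

end Tubes

/-! ### Tightness of the bottom curve -/

section Tightness

variable {k : ℕ} {x y : Fin k → ℤ} {p M η : ℝ} {n : ℕ}

lemma eventually_mul_sqrt_le (a : ℝ) {ε : ℝ} (hε : 0 < ε) :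
    ∀ᶠ n : ℕ in atTop, 1 ≤ √(n : ℝ) ∧ a * √(n : ℝ) ≤ ε * n := by
  have hsqrt : Tendsto (fun n : ℕ => √(n : ℝ)) atTop atTop :=
    Real.tendsto_sqrt_atTop.comp tendsto_natCast_atTop_atTop
  filter_upwards [hsqrt.eventually_ge_atTop 1, hsqrt.eventually_ge_atTop (a / ε)] with n h₁ ha
  refine ⟨h₁, ?_⟩
  calc a * √(n : ℝ) ≤ ε * √(n : ℝ) * √(n : ℝ) :=
        mul_le_mul_of_nonneg_right ((div_le_iff₀' hε).1 ha) (Real.sqrt_nonneg _)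
    _ = ε * n := by rw [mul_assoc, Real.mul_self_sqrt n.cast_nonneg]

lemma varianceBound_mono {q q' : ℝ} (hq : 0 ≤ q) (h : q ≤ q') :
    varianceBound q ≤ varianceBound q' := by
  unfold varianceBound
  gcongr

/-- Entrance and exit data which are, up to `M √n`, at least those of the line of slope `p`. -/
structure SideBound (p M : ℝ) (n : ℕ) (x y : Fin k → ℤ) : Prop where
  antitone : Antitone x
  left : ∀ i, -(M * √(n : ℝ)) ≤ x i
  right : ∀ i, p * n - M * √(n : ℝ) ≤ y i

lemma SideBound.exists_endpoints (h : SideBound p M n x y) (hp : 0 ≤ p) :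
    ∃ z w : ℤ, z ≤ w ∧ -(M * √(n : ℝ)) - 1 ≤ z ∧ (p * n - 1 ≤ w - z ∧ w - z ≤ p * n) ∧
      ∀ (g : ℤ → EReal) (e : Fin k),
        {Q ∈ ensemble 0 n x y g | z ≤ Q e 0 ∧ w ≤ Q e n} = ensemble 0 n x y g := by
  have hz := Int.floor_le (-(M * √(n : ℝ)))
  have hw := Int.floor_le (p * n)
  refine ⟨⌊-(M * √(n : ℝ))⌋, ⌊-(M * √(n : ℝ))⌋ + ⌊p * n⌋, ?_, (Int.sub_one_lt_floor _).le, ?_,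
    fun g e => sep_eq_self_iff_mem_true.2 fun Q hQ => ?_⟩
  · exact le_add_of_nonneg_right (Int.floor_nonneg.2 (by positivity))
  · push_cast
    constructor <;> linarith [Int.sub_one_lt_floor (p * n)]
  · rw [hQ.2.1, hQ.2.2.1]
    have hx := hz.trans (h.left e)
    have hy : (⌊-(M * √(n : ℝ))⌋ + ⌊p * n⌋ : ℝ) ≤ y e := by linarith [h.right e]
    exact ⟨by exact_mod_cast hx, by exact_mod_cast hy⟩

lemma bottom_curve_tight (hp : 0 < p) (hη : η ∈ Ioo (0 : ℝ) 1) (M : ℝ)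
    (k : ℕ) :
    ∃ R, ∀ᶠ n : ℕ in atTop, ∀ x y : Fin k → ℤ, SideBound p M n x y → ∀ g, ∀ e : Fin k, IsTop e →
      ∀ t ∈ Icc 0 (n : ℤ), ∀ v : ℤ, v ≤ p * t - R * √(n : ℝ) →
        ProportionGE (1 - η) (ensemble 0 n x y g) fun Q => v ≤ Q e t := by
  set B := √(k / η * varianceBound p)
  refine ⟨M + 2 + k * (2 * B + p + 1) + B, ?_⟩
  filter_upwards [eventually_mul_sqrt_le 0 one_pos] with n ⟨hn, _⟩ x y hxy g e he t ht v hv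
  have hk : (0 : ℝ) < k := Nat.cast_pos.2 (Fin.pos e)
  have hn₀ : (0 : ℝ) < n := Real.sqrt_pos.1 (one_pos.trans_le hn)
  have hvar : 0 < k / η * varianceBound p := mul_pos (div_pos hk hη.1) (varianceBound_pos p)
  have hB : 0 < B := Real.sqrt_pos.2 hvar
  obtain ⟨z, w, hzw, hz, ⟨hlow, hhigh⟩, hsep⟩ := hxy.exists_endpoints hp.le
  set q : ℝ := (w - z) / ((n : ℤ) - (0 : ℤ)) with hq
  have hqn : q * n = w - z := by
    rw [hq, Int.cast_zero, sub_zero]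
    exact div_mul_cancel₀ _ hn₀.ne'
  have hq₀ : 0 ≤ q := by
    have : (z : ℝ) ≤ w := Int.cast_le.2 hzw
    nlinarith
  have hqp : q ≤ p := le_of_mul_le_mul_right (by rwa [hqn]) hn₀
  rw [← hsep g e]
  refine ProportionGE.of_chord (D := B * √(n : ℝ)) hxy.antitone he hη.2 le_rfl
    (by exact_mod_cast hn₀) le_rfl hzw ht (mul_pos hB (Real.sqrt_pos.2 hn₀)) ?_ ?_
  · rw [mul_pow, Real.sq_sqrt hvar.le, Real.sq_sqrt hn₀.le, ← hq]
    calc varianceBound q * ((n : ℤ) - (0 : ℤ)) ≤ varianceBound p * n := by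
          push_cast
          rw [sub_zero]
          exact mul_le_mul_of_nonneg_right (varianceBound_mono hq₀ hqp) hn₀.le
      _ = η / k * (k / η * varianceBound p * n) := by
          field_simp [hη.1.ne']
  · have : (0 : ℝ) ≤ t := Int.cast_nonneg ht.1
    have htn : (t : ℝ) ≤ n := by exact_mod_cast ht.2
    have hchord : z + p * t - 1 ≤ chord (0 : ℤ) (n : ℤ) z w t := by
      have hchord_eq : chord (0 : ℤ) (n : ℤ) z w t = z + q * t := by
        rw [chord, hq]
        push_cast
        ring
      have hpq : (p - q) * t ≤ (p - q) * n := mul_le_mul_of_nonneg_left htn (sub_nonneg.2 hqp)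
      linarith
    have hkn : k * (2 * (B * √(n : ℝ)) + q + 1) ≤ k * (2 * B + p + 1) * √(n : ℝ) := by
      rw [mul_assoc]
      gcongr
      nlinarith
    rw [← hq]
    linarith

end Tightness

/-! ### Bridges through a high point -/

section Exchange

variable {c T₀ t T₁ z w ζ : ℤ} {K p δ S : ℝ}

lemma multichoose_mul_multichoose_le {l l' a b : ℕ}
    (h : ((a + 1) * (l' + b) : ℝ) ≤ K * ((l + a) * (b + 1))) :
    (l.multichoose a * l'.multichoose (b + 1) : ℝ)
      ≤ K * (l.multichoose (a + 1) * l'.multichoose b) := by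
  have hab : (0 : ℝ) < (a + 1) * (b + 1) := by positivity
  refine le_of_mul_le_mul_left ?_ hab
  calc ((a + 1) * (b + 1) * (l.multichoose a * l'.multichoose (b + 1)) : ℝ)
      = (a + 1) * (l' + b) * (l.multichoose a * l'.multichoose b) := by
        linear_combination (a + 1 : ℝ) * l.multichoose a * succ_mul_multichoose_succ l' b
    _ ≤ K * ((l + a) * (b + 1)) * (l.multichoose a * l'.multichoose b) := by gcongr
    _ = (a + 1) * (b + 1) * (K * (l.multichoose (a + 1) * l'.multichoose b)) := by
        linear_combination (-K * (b + 1) * l'.multichoose b) * succ_mul_multichoose_succ l a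

lemma ncard_bridges_through_le_succ (ht : t ∈ Icc T₀ T₁) (hz : z ≤ ζ) (hw : ζ < w)
    (h : ((ζ - z + 1) * (T₁ - t + (w - ζ) - 1) : ℝ) ≤ K * ((t - T₀ + (ζ - z)) * (w - ζ))) :
    ({Q ∈ bridges c T₀ T₁ z w ⊤ | Q t = ζ}.ncard : ℝ)
      ≤ K * {Q ∈ bridges c T₀ T₁ z w ⊤ | Q t = ζ + 1}.ncard := by
  obtain ⟨l, hl⟩ : ∃ l : ℕ, T₀ = t - l := ⟨(t - T₀).toNat, by have := ht.1; omega⟩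
  obtain ⟨l', hl'⟩ : ∃ l' : ℕ, t = T₁ - l' := ⟨(T₁ - t).toNat, by have := ht.2; omega⟩
  obtain ⟨a, ha⟩ : ∃ a : ℕ, ζ = z + a := ⟨(ζ - z).toNat, by omega⟩
  obtain ⟨b, hb⟩ : ∃ b : ℕ, w = ζ + 1 + b := ⟨(w - ζ - 1).toNat, by omega⟩
  have hleft (m : ℕ) : (bridges c T₀ t z (z + m) ⊤).ncard = l.multichoose m := by
    rw [← ncard_bridges_top c t (z + m) l m, add_sub_cancel_right, hl]
  have hright (m : ℕ) : (bridges c t T₁ (w - m) w ⊤).ncard = l'.multichoose m := by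
    rw [← ncard_bridges_top c T₁ w l' m, ← hl']
  rw [ncard_bridges_through ht.1 ht.2, ncard_bridges_through ht.1 ht.2]
  have hζ : ζ = w - (b + 1 : ℕ) := by push_cast; omega
  have hζ' : ζ + 1 = w - b := by omega
  have hζ'' : ζ + 1 = z + (a + 1 : ℕ) := by push_cast; omega
  rw [show bridges c t T₁ ζ w ⊤ = bridges c t T₁ (w - (b + 1 : ℕ)) w ⊤ by rw [← hζ], hright,
    show bridges c t T₁ (ζ + 1) w ⊤ = bridges c t T₁ (w - b) w ⊤ by rw [← hζ'], hright, hζ'', hleft,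
    show bridges c T₀ t z ζ ⊤ = bridges c T₀ t z (z + a) ⊤ by rw [← ha], hleft]
  push_cast
  refine multichoose_mul_multichoose_le ?_
  rw [hb, ha, hl, hl'] at h
  push_cast at h
  convert h using 2 <;> ring

lemma mul_le_one_add_div_mul {t s α β : ℝ} (hp : 0 < p) (hδ : 0 < δ) (hK : 0 ≤ K) (hS : 1 ≤ S)
    (ht : δ * S ^ 2 ≤ t) (hs : 0 ≤ s) (hts : t + s = S ^ 2) (hα : 0 ≤ α) (hαt : α ≤ p * t + K * S)
    (hβs : p * s - (K + 1) * S ≤ β) (hβ : p * δ * S ^ 2 / 2 ≤ β) (hαβ : α + β ≤ p * S ^ 2 + 1) :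
    (α + 1) * (s + β - 1) ≤ (1 + 2 * (K + p + 3) / (p * δ ^ 2) / S) * ((t + α) * β) := by
  have hS₂₃ : S ^ 2 ≤ S ^ 3 := pow_le_pow_right₀ hS (by norm_num)
  have ht₀ : 0 ≤ t := le_trans (by positivity) ht
  have hmain : α * s - t * β ≤ (K + 1) * S ^ 3 := by
    have h₁ := mul_le_mul_of_nonneg_right hαt hs
    have h₂ := mul_le_mul_of_nonneg_left hβs ht₀
    have h₃ : t * S ≤ S ^ 2 * S := by gcongr; linarith
    linear_combination h₁ + h₂ + h₃ + K * S * hts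
  have hrest : s + β - α - 1 ≤ (p + 2) * S ^ 3 := by
    have h₁ := mul_le_mul_of_nonneg_left hS₂₃ hp.le
    linarith
  have hgain : (K + p + 3) * S ^ 3 ≤ 2 * (K + p + 3) / (p * δ ^ 2) / S * ((t + α) * β) := by
    calc (K + p + 3) * S ^ 3
        = 2 * (K + p + 3) / (p * δ ^ 2) / S * (δ * S ^ 2 * (p * δ * S ^ 2 / 2)) := by field_simp
      _ ≤ 2 * (K + p + 3) / (p * δ ^ 2) / S * ((t + α) * β) := by
        gcongr
        linarith
  linarith

/-- Raising the height of a bridge at time `t` by one within the diffusive window costs a factor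
`1 + O(1 / S)`, so raising it by `O(S)` costs a constant factor. -/
lemma ncard_bridges_through_le_exp {h : ℝ} {H : ℕ} (hp : 0 < p) (hδ : 0 < δ) (hK : 0 ≤ K)
    (hS : 1 ≤ S) (hT : (T₁ - T₀ : ℝ) = S ^ 2) (ht₀ : δ * S ^ 2 ≤ t - T₀) (ht₁ : δ * S ^ 2 ≤ T₁ - t)
    (hzw : |w - z - p * S ^ 2| ≤ 1) (hKS : (K + 1) * S ≤ p * δ * S ^ 2 / 2) (hz : z ≤ ζ)
    (hζ : ζ + H ≤ z + p * (t - T₀) + K * S) (hH : H ≤ h * S) (c : ℤ) :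
    ({Q ∈ bridges c T₀ T₁ z w ⊤ | Q t = ζ}.ncard : ℝ)
      ≤ Real.exp (2 * (K + p + 3) / (p * δ ^ 2) * h)
        * {Q ∈ bridges c T₀ T₁ z w ⊤ | Q t = ζ + H}.ncard := by
  set C := 2 * (K + p + 3) / (p * δ ^ 2)
  have hzw := abs_le.1 hzw
  have : 0 < S := one_pos.trans_le hS
  have hδS : 0 < δ * S ^ 2 := by positivity
  have ht : t ∈ Icc T₀ T₁ := by
    rw [mem_Icc, ← Int.cast_le (R := ℝ), ← Int.cast_le (R := ℝ)]
    constructor <;> linarith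
  have hpT : p * (T₁ - T₀) = p * S ^ 2 := by rw [hT]
  have hpδ : p * (δ * S ^ 2) ≤ p * (T₁ - t) := by gcongr
  have hstep (j : ℕ) (hj : j < H) :
      ({Q ∈ bridges c T₀ T₁ z w ⊤ | Q t = ζ + H - (j + 1 : ℕ)}.ncard : ℝ)
        ≤ (1 + C / S) * {Q ∈ bridges c T₀ T₁ z w ⊤ | Q t = ζ + H - j}.ncard := by
    have hjH : (j + 1 : ℝ) ≤ H := by exact_mod_cast hj
    have hz' : (z : ℝ) ≤ ζ := Int.cast_le.2 hz
    have hpδ' : 0 < p * (δ * S ^ 2) := by positivity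
    rw [show ζ + H - j = ζ + H - (j + 1 : ℕ) + 1 by push_cast; ring]
    refine ncard_bridges_through_le_succ ht (by omega) ?_ ?_
    · suffices (ζ + H - (j + 1 : ℕ) : ℝ) < w by exact_mod_cast this
      push_cast
      linarith
    · push_cast
      refine mul_le_one_add_div_mul hp hδ hK hS ht₀ ?_ ?_ ?_ ?_ ?_ ?_ ?_ <;> linarith
  have hiterate := le_geom (u := fun j : ℕ =>
    ({Q ∈ bridges c T₀ T₁ z w ⊤ | Q t = ζ + H - j}.ncard : ℝ)) (by positivity) H hstep
  simp only [Nat.cast_zero, sub_zero, add_sub_cancel_right] at hiterate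
  refine hiterate.trans (mul_le_mul_of_nonneg_right ?_ (Nat.cast_nonneg _))
  calc (1 + C / S) ^ H ≤ Real.exp (C / S) ^ H := by
        gcongr
        linarith [Real.add_one_le_exp (C / S)]
    _ = Real.exp (C / S * H) := by rw [← Real.exp_nat_mul, mul_comm]
    _ ≤ Real.exp (C / S * (h * S)) := by gcongr
    _ = Real.exp (C * h) := by field_simp

end Exchange

section BentTube

variable {c T₀ t T₁ z w ζ : ℤ} {D R ξ : ℝ}

lemma ncard_le_mul_ncard_of_fiber {α β γ : Type*} {A : Set α} {B : Set β} {f : α → γ} {f' : β → γ}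
    (hA : A.Finite) (hB : B.Finite) {E : ℝ}
    (h : ∀ a ∈ A, ({a' ∈ A | f a' = f a}.ncard : ℝ) ≤ E * {b ∈ B | f' b = f a}.ncard) (hE : 0 ≤ E) :
    (A.ncard : ℝ) ≤ E * B.ncard := by
  classical
  set t := (hA.image f).toFinset ∪ (hB.image f').toFinset
  have hAt : ∀ a ∈ A, f a ∈ t := fun a ha => by simp [t, mem_image_of_mem f ha]
  have hBt : ∀ b ∈ B, f' b ∈ t := fun b hb => by simp [t, mem_image_of_mem f' hb]
  rw [ncard_eq_sum_ncard_fiber hA hAt, ncard_eq_sum_ncard_fiber hB hBt, Nat.cast_sum, Nat.cast_sum,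
    Finset.mul_sum]
  refine Finset.sum_le_sum fun b _ => ?_
  by_cases hb : ∃ a ∈ A, f a = b
  · obtain ⟨a, ha, rfl⟩ := hb
    exact h a ha
  · have : {a ∈ A | f a = b} = ∅ := eq_empty_of_forall_notMem fun a ha => hb ⟨a, ha⟩
    rw [this, ncard_empty, Nat.cast_zero]
    positivity

lemma ncard_bridges_le_two_mul_ncard_tube (hT : T₀ < T₁) (hzw : z ≤ w) (hD : 0 < D)
    (hvar : 2 * (varianceBound ((w - z) / (T₁ - T₀)) * (T₁ - T₀)) ≤ D ^ 2) (c : ℤ) :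
    ((bridges c T₀ T₁ z w ⊤).ncard : ℝ)
      ≤ 2 * (bridges c T₀ T₁ z w (tube (fun s => chord T₀ T₁ z w s) D)).ncard := by
  refine le_of_mul_le_mul_left ?_ (pow_pos hD 2)
  have h := ncard_bridges_chord_ge hT hzw hD c
  have := mul_le_mul_of_nonneg_right hvar (bridges c T₀ T₁ z w ⊤).ncard.cast_nonneg (α := ℝ)
  linarith

lemma abs_chord_sub_chord_le {T₀ T₁ z w z' w' s : ℝ} (hs : s ∈ Icc T₀ T₁) (hz : |z - z'| ≤ R)
    (hw : |w - w'| ≤ R) : |chord T₀ T₁ z w s - chord T₀ T₁ z' w' s| ≤ R := by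
  set a := (s - T₀) / (T₁ - T₀)
  have ha₀ : 0 ≤ a := div_nonneg (sub_nonneg.2 hs.1) (by linarith [hs.1, hs.2])
  have ha₁ : a ≤ 1 := div_le_one_of_le₀ (by linarith [hs.2]) (by linarith [hs.1, hs.2])
  calc |chord T₀ T₁ z w s - chord T₀ T₁ z' w' s| = |(1 - a) * (z - z') + a * (w - w')| := by
        simp only [chord, a]
        ring_nf
    _ ≤ |(1 - a) * (z - z')| + |a * (w - w')| := abs_add_le _ _
    _ = (1 - a) * |z - z'| + a * |w - w'| := by
        rw [abs_mul, abs_mul, abs_of_nonneg ha₀, abs_of_nonneg (sub_nonneg.2 ha₁)]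
    _ ≤ (1 - a) * R + a * R := by
        have := sub_nonneg.2 ha₁
        gcongr
    _ = R := by ring

/-- The piecewise affine function with value `z` at time `T₀`, `ξ` at time `t` and `w` at time
`T₁`. -/
noncomputable def bentChord (T₀ t T₁ z ξ w s : ℝ) : ℝ :=
  if s ≤ t then chord T₀ t z ξ s else chord t T₁ ξ w s

lemma bentChord_of_ge {T₀ t T₁ z ξ w s : ℝ} (h₀ : T₀ < t) (hs : t ≤ s) :
    bentChord T₀ t T₁ z ξ w s = chord t T₁ ξ w s := by
  rcases hs.eq_or_lt with rfl | hs
  · rw [bentChord, if_pos le_rfl, chord, chord, div_self (sub_pos.2 h₀).ne']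
    ring
  · rw [bentChord, if_neg hs.not_ge]

lemma ncard_bridges_through_le_four_mul_bentChord (hT₀ : T₀ < t) (hT₁ : t < T₁) (hz : z ≤ ζ)
    (hw : ζ ≤ w) (hD : 0 < D) (hR : |ζ - ξ| ≤ R)
    (hvar₀ : 2 * (varianceBound ((ζ - z) / (t - T₀)) * (t - T₀)) ≤ D ^ 2)
    (hvar₁ : 2 * (varianceBound ((w - ζ) / (T₁ - t)) * (T₁ - t)) ≤ D ^ 2) (c : ℤ) :
    ({Q ∈ bridges c T₀ T₁ z w ⊤ | Q t = ζ}.ncard : ℝ)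
      ≤ 4 * {Q ∈ bridges c T₀ T₁ z w (tube (fun s => bentChord T₀ t T₁ z ξ w s) (D + R)) |
          Q t = ζ}.ncard := by
  set ψ := tube (fun s => bentChord T₀ t T₁ z ξ w s) (D + R)
  have hR₀ : 0 ≤ R := (abs_nonneg _).trans hR
  have hleft : bridges c T₀ t z ζ (tube (fun s => chord T₀ t z ζ s) D) ⊆ bridges c T₀ t z ζ ψ := by
    refine bridges_mono fun s hs v hv => ?_
    have hst : (s : ℝ) ≤ t := Int.cast_le.2 hs.2
    simp only [ψ, tube, bentChord, if_pos hst] at hv ⊢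
    refine (abs_sub_le _ (chord T₀ t z ζ s) _).trans_lt (add_lt_add_of_lt_of_le hv ?_)
    exact abs_chord_sub_chord_le ⟨Int.cast_le.2 hs.1, hst⟩ (by simpa using hR₀) hR
  have hright : bridges c t T₁ ζ w (tube (fun s => chord t T₁ ζ w s) D) ⊆ bridges c t T₁ ζ w ψ := by
    refine bridges_mono fun s hs v hv => ?_
    have hst : (t : ℝ) ≤ s := Int.cast_le.2 hs.1
    simp only [ψ, tube, bentChord_of_ge (Int.cast_lt.2 hT₀) hst] at hv ⊢
    refine (abs_sub_le _ (chord t T₁ ζ w s) _).trans_lt (add_lt_add_of_lt_of_le hv ?_)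
    exact abs_chord_sub_chord_le ⟨hst, Int.cast_le.2 hs.2⟩ hR (by simpa using hR₀)
  rw [ncard_bridges_through hT₀.le hT₁.le, ncard_bridges_through hT₀.le hT₁.le]
  push_cast
  calc ((bridges c T₀ t z ζ ⊤).ncard * (bridges c t T₁ ζ w ⊤).ncard : ℝ)
      ≤ (2 * (bridges c T₀ t z ζ ψ).ncard) * (2 * (bridges c t T₁ ζ w ψ).ncard) := by
        gcongr
        · refine (ncard_bridges_le_two_mul_ncard_tube hT₀ hz hD hvar₀ c).trans ?_
          gcongr
          exact bridges_finite
        · refine (ncard_bridges_le_two_mul_ncard_tube hT₁ hw hD hvar₁ c).trans ?_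
          gcongr
          exact bridges_finite
    _ = 4 * ((bridges c T₀ t z ζ ψ).ncard * (bridges c t T₁ ζ w ψ).ncard) := by ring

end BentTube

section Raising

variable {T₀ t T₁ z w ζ : ℤ} {p δ S D h q ξ : ℝ}

lemma two_mul_varianceBound_mul_le {u l : ℝ} (hu₀ : 0 ≤ u) (hu : u ≤ (p + 1) * l)
    (hl₀ : 0 < l) (hl : l ≤ S ^ 2) (hD : 2 * varianceBound (p + 1) ≤ D ^ 2) :
    2 * (varianceBound (u / l) * l) ≤ (D * S) ^ 2 := by
  have hvar : varianceBound (u / l) ≤ varianceBound (p + 1) :=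
    varianceBound_mono (by positivity) ((div_le_iff₀ hl₀).2 hu)
  have hpos := varianceBound_pos (p + 1)
  calc 2 * (varianceBound (u / l) * l) ≤ 2 * varianceBound (p + 1) * S ^ 2 := by
        rw [← mul_assoc]
        gcongr
    _ ≤ D ^ 2 * S ^ 2 := by gcongr
    _ = (D * S) ^ 2 := (mul_pow _ _ _).symm

lemma ncard_bridges_through_le_mul_bentChord (hp : 0 < p) (hδ : 0 < δ) (hD₀ : 0 < D) (hh : 0 ≤ h)
    (hS : 1 ≤ S) (hT : (T₁ - T₀ : ℝ) = S ^ 2) (ht₀ : δ * S ^ 2 ≤ t - T₀) (ht₁ : δ * S ^ 2 ≤ T₁ - t)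
    (hzw : |w - z - p * S ^ 2| ≤ 1) (hD : 2 * varianceBound (p + 1) ≤ D ^ 2)
    (hlarge : (D + h + 4) * S ≤ δ * S ^ 2) (hlarge' : (D + h + 4) * S ≤ p * δ * S ^ 2 / 2)
    (hz : z ≤ ζ) (hζ : |ζ - (z + p * (t - T₀))| ≤ D * S + 1) (c : ℤ) :
    ({Q ∈ bridges c T₀ T₁ z w ⊤ | Q t = ζ}.ncard : ℝ)
      ≤ Real.exp (2 * (D + h + p + 5) / (p * δ ^ 2) * (h + 1))
        * (4 * {Q ∈ bridges c T₀ T₁ z w (tube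
          (fun s => bentChord T₀ t T₁ z (z + p * (t - T₀) + h * S) w s) ((2 * D + 2) * S)) |
            Q t = ζ + ⌈h * S⌉₊}.ncard) := by
  have hzw' := abs_le.1 hzw
  have hζ := abs_le.1 hζ
  have hS₀ : 0 < S := one_pos.trans_le hS
  have hDS : 0 < D * S := mul_pos hD₀ hS₀
  have hhS : 0 ≤ h * S := mul_nonneg hh hS₀.le
  have hδS : 0 < δ * S ^ 2 := by positivity
  have hpδ : p * (δ * S ^ 2) ≤ p * (T₁ - t) := by gcongr
  have hpT : p * (T₁ - T₀) = p * S ^ 2 := by rw [hT]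
  have hT₀ : T₀ < t := by exact_mod_cast sub_pos.1 (hδS.trans_le ht₀)
  have hT₁ : t < T₁ := by exact_mod_cast sub_pos.1 (hδS.trans_le ht₁)
  have hz' : (z : ℝ) ≤ ζ := Int.cast_le.2 hz
  set H := ⌈h * S⌉₊
  have hH : h * S ≤ H := Nat.le_ceil _
  have hH' : (H : ℝ) < h * S + 1 := Nat.ceil_lt_add_one hhS
  have hw' : (ζ + H : ℝ) ≤ w := by linarith
  have hw : ζ + H ≤ w := by exact_mod_cast hw'
  rw [show D + h + p + 5 = D + h + 2 + p + 3 by ring]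
  refine (ncard_bridges_through_le_exp (K := D + h + 2) (h := h + 1) hp hδ (by positivity) hS hT
    ht₀ ht₁ hzw (by linarith) hz (by linarith) (by linarith) c).trans ?_
  gcongr
  rw [show (2 * D + 2) * S = D * S + (D + 2) * S by ring]
  refine ncard_bridges_through_le_four_mul_bentChord hT₀ hT₁ (by omega) hw hDS ?_
    (two_mul_varianceBound_mul_le ?_ ?_ ?_ ?_ hD) (two_mul_varianceBound_mul_le ?_ ?_ ?_ ?_ hD) c
  all_goals push_cast
  · rw [abs_le]
    constructor <;> linarith
  all_goals linarith

lemma ncard_bridges_le_mul_ncard_bentChord (hp : 0 < p) (hδ : 0 < δ) (hD₀ : 0 < D) (hh : 0 ≤ h)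
    (hS : 1 ≤ S) (hT : (T₁ - T₀ : ℝ) = S ^ 2) (ht₀ : δ * S ^ 2 ≤ t - T₀) (ht₁ : δ * S ^ 2 ≤ T₁ - t)
    (hzw₀ : z ≤ w) (hzw : |w - z - p * S ^ 2| ≤ 1) (hD : 2 * varianceBound (p + 1) ≤ D ^ 2)
    (hlarge : (D + h + 4) * S ≤ δ * S ^ 2) (hlarge' : (D + h + 4) * S ≤ p * δ * S ^ 2 / 2) (c : ℤ) :
    ((bridges c T₀ T₁ z w ⊤).ncard : ℝ)
      ≤ 2 * (Real.exp (2 * (D + h + p + 5) / (p * δ ^ 2) * (h + 1)) * 4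
        * (bridges c T₀ T₁ z w (tube (fun s => bentChord T₀ t T₁ z (z + p * (t - T₀) + h * S) w s)
          ((2 * D + 2) * S))).ncard) := by
  have hS₀ : 0 < S := one_pos.trans_le hS
  have hδS : 0 < δ * S ^ 2 := by positivity
  have hT₀ : T₀ < t := by exact_mod_cast sub_pos.1 (hδS.trans_le ht₀)
  have hT₁ : t < T₁ := by exact_mod_cast sub_pos.1 (hδS.trans_le ht₁)
  have hslope : (w - z : ℝ) ≤ (p + 1) * (T₁ - T₀) := by
    rw [hT]
    linarith [one_le_pow₀ hS (n := 2), (abs_le.1 hzw).2]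
  refine (ncard_bridges_le_two_mul_ncard_tube (hT₀.trans hT₁) hzw₀ (mul_pos hD₀ hS₀)
    (two_mul_varianceBound_mul_le (sub_nonneg.2 (Int.cast_le.2 hzw₀)) hslope (by linarith) hT.le hD)
    c).trans ?_
  gcongr
  refine ncard_le_mul_ncard_of_fiber (f := fun Q => Q t) (f' := fun Q => Q t - (⌈h * S⌉₊ : ℤ))
    bridges_finite bridges_finite (fun Q hQ => ?_) (by positivity)
  have ht : t ∈ Icc T₀ T₁ := ⟨hT₀.le, hT₁.le⟩
  have hline : |chord T₀ T₁ z w t - chord T₀ T₁ z (z + p * S ^ 2) t| ≤ 1 :=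
    abs_chord_sub_chord_le ⟨Int.cast_le.2 hT₀.le, Int.cast_le.2 hT₁.le⟩ (by simp)
      (by rwa [← sub_sub])
  have hchord : chord T₀ T₁ z (z + p * S ^ 2) t = z + p * (t - T₀) := by
    rw [chord, hT]
    field_simp
    ring
  have hQt : |Q t - (z + p * (t - T₀))| ≤ D * S + 1 := by
    rw [← hchord]
    exact (abs_sub_le _ _ _).trans (add_le_add (hQ.2.2.2.2 t ht).le hline)
  have hsub : {Q' ∈ bridges c T₀ T₁ z w (tube (fun s => chord T₀ T₁ z w s) (D * S)) | Q' t = Q t}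
      ⊆ {Q' ∈ bridges c T₀ T₁ z w ⊤ | Q' t = Q t} :=
    fun Q' hQ' => ⟨bridges_mono (fun _ _ _ _ => trivial) hQ'.1, hQ'.2⟩
  simp only [mul_assoc _ (4 : ℝ), sub_eq_iff_eq_add]
  exact (Nat.cast_le.2 (ncard_le_ncard hsub (bridges_finite.subset (sep_subset _ _)))).trans
    (ncard_bridges_through_le_mul_bentChord hp hδ hD₀ hh hS hT ht₀ ht₁ hzw hD hlarge hlarge'
      (mem_Icc_of_mem_bridges hQ ht).1 hQt c)

lemma bentChord_sub_bentChord_le (hT₀ : T₀ < t) (hT₁ : t < T₁) (hq₀ : ξ - z ≤ q * (t - T₀))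
    (hq₁ : w - ξ ≤ q * (T₁ - t)) (r : ℤ) :
    bentChord T₀ t T₁ z ξ w r - bentChord T₀ t T₁ z ξ w (r - 1 : ℤ) ≤ q := by
  have hslope {a b u v s : ℝ} (hab : a < b) (huv : v - u ≤ q * (b - a)) :
      chord a b u v s - chord a b u v (s - 1) ≤ q := by
    have : chord a b u v s - chord a b u v (s - 1) = (v - u) / (b - a) := by
      rw [chord, chord]
      ring
    rwa [this, div_le_iff₀ (sub_pos.2 hab)]
  have hT₀' : (T₀ : ℝ) < t := Int.cast_lt.2 hT₀
  rcases le_or_gt r t with hr | hr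
  · have hr' : (r : ℝ) ≤ t := Int.cast_le.2 hr
    rw [bentChord, if_pos hr', bentChord, if_pos (by push_cast; linarith), Int.cast_sub,
      Int.cast_one]
    exact hslope hT₀' hq₀
  · have hr' : (t : ℝ) ≤ (r - 1 : ℤ) := Int.cast_le.2 (by omega)
    rw [bentChord_of_ge hT₀' hr', bentChord_of_ge hT₀' (Int.cast_le.2 hr.le), Int.cast_sub,
      Int.cast_one]
    exact hslope (Int.cast_lt.2 hT₁) hq₁

lemma ProportionGE.of_bentChord {k : ℕ} {S₀ S₁ : ℤ} {x y : Fin k → ℤ} {g : ℤ → EReal} {e : Fin k}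
    {v : ℤ} (hx : Antitone x) (he : IsTop e) (hS₀ : S₀ ≤ T₀) (hS₁ : T₁ ≤ S₁)
    (hp : 0 < p) (hδ : 0 < δ) (hD₀ : 0 < D) (hh : 0 ≤ h) (hS : 1 ≤ S)
    (hT : (T₁ - T₀ : ℝ) = S ^ 2) (ht₀ : δ * S ^ 2 ≤ t - T₀) (ht₁ : δ * S ^ 2 ≤ T₁ - t)
    (hzw₀ : z ≤ w) (hzw : |w - z - p * S ^ 2| ≤ 1) (hD : 2 * varianceBound (p + 1) ≤ D ^ 2)
    (hlarge : (D + h + 4) * S ≤ δ * S ^ 2) (hlarge' : (D + h + 4) * S ≤ p * δ * S ^ 2 / 2)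
    (hv : v ≤ z + p * (t - T₀) + h * S - k * (2 * ((2 * D + 2) * S) + p + 2) - (2 * D + 2) * S) :
    ProportionGE ((2 * (Real.exp (2 * (D + h + p + 5) / (p * δ ^ 2) * (h + 1)) * 4))⁻¹ ^ k)
      {Q ∈ ensemble S₀ S₁ x y g | z ≤ Q e T₀ ∧ w ≤ Q e T₁} fun Q => v ≤ Q e t := by
  have hS' : 0 < S := one_pos.trans_le hS
  have hδS : 0 < δ * S ^ 2 := by positivity
  have hT₀ : T₀ < t := by exact_mod_cast sub_pos.1 (hδS.trans_le ht₀)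
  have hT₁ : t < T₁ := by exact_mod_cast sub_pos.1 (hδS.trans_le ht₁)
  have hhS : h * S ≤ δ * S ^ 2 := by nlinarith
  have hhS₀ : 0 ≤ h * S := mul_nonneg hh hS'.le
  have hzw' := (abs_le.1 hzw).2
  refine ProportionGE.of_tube (D := (2 * D + 2) * S) (d := ⌈2 * ((2 * D + 2) * S) + (p + 1)⌉)
    (lam := fun s => bentChord T₀ t T₁ z (z + p * (t - T₀) + h * S) w s)
    hx he (by positivity) hS₀ (hT₀.trans hT₁) hS₁ hzw₀ ⟨hT₀.le, hT₁.le⟩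
    (Int.ceil_nonneg (by positivity)) (fun c => ?_) (fun r _ _ => ?_) ?_
  · rw [inv_mul_le_iff₀ (by positivity), mul_assoc]
    exact ncard_bridges_le_mul_ncard_bentChord hp hδ hD₀ hh hS hT ht₀ ht₁ hzw₀ hzw hD hlarge
      hlarge' c
  · have hslope := bentChord_sub_bentChord_le (z := z) (ξ := z + p * (t - T₀) + h * S) (w := w)
      (q := p + 1) hT₀ hT₁ (by linarith) (by nlinarith) r
    exact (add_comm _ _).trans_le ((by gcongr : _ ≤ _).trans (Int.le_ceil _))
  · have hbend : bentChord T₀ t T₁ z (z + p * (t - T₀) + h * S) w t = z + p * (t - T₀) + h * S := by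
      simp [bentChord_of_ge (Int.cast_lt.2 hT₀) le_rfl, chord]
    have hek : (e : ℝ) ≤ k := Nat.cast_le.2 e.is_lt.le
    have hstack : (e : ℝ) * ⌈2 * ((2 * D + 2) * S) + (p + 1)⌉
        ≤ k * (2 * ((2 * D + 2) * S) + p + 2) := by
      have hceil := (Int.ceil_lt_add_one (2 * ((2 * D + 2) * S) + (p + 1))).le
      have : 0 ≤ (2 * D + 2) * S := by positivity
      exact mul_le_mul hek (by linarith) (Int.cast_nonneg (Int.ceil_nonneg (by positivity)))
        k.cast_nonneg
    rw [hbend]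
    linarith

lemma bottom_curve_raise (hp : 0 < p) (hδ : 0 < δ) (M K : ℝ) (k : ℕ) :
    ∃ ε > 0, ∀ᶠ n : ℕ in atTop, ∀ x y : Fin k → ℤ, SideBound p M n x y → ∀ g, ∀ e : Fin k, IsTop e →
      ∀ t : ℤ, δ * n ≤ t → t ≤ n - δ * n → ∀ v : ℤ, v ≤ p * t + K * √(n : ℝ) →
        ProportionGE ε (ensemble 0 n x y g) fun Q => v ≤ Q e t := by
  set D := √(2 * varianceBound (p + 1))
  have hvar : 0 < 2 * varianceBound (p + 1) := mul_pos two_pos (varianceBound_pos _)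
  set h := |K + M + 1 + k * (2 * (2 * D + 2) + p + 2) + (2 * D + 2)|
  refine ⟨(2 * (Real.exp (2 * (D + h + p + 5) / (p * δ ^ 2) * (h + 1)) * 4))⁻¹ ^ k,
    by positivity, ?_⟩
  filter_upwards [eventually_mul_sqrt_le (D + h + 4) hδ,
    eventually_mul_sqrt_le (D + h + 4) (by positivity : 0 < p * δ / 2)]
    with n ⟨hS, hlarge⟩ ⟨_, hlarge'⟩ x y hxy g e he t ht₀ ht₁ v hv
  have hn : (n : ℝ) = √(n : ℝ) ^ 2 := (Real.sq_sqrt n.cast_nonneg).symm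
  set S := √(n : ℝ)
  obtain ⟨z, w, hzw, hz, ⟨hlow, hhigh⟩, hsep⟩ := hxy.exists_endpoints hp.le
  rw [hn] at ht₀ ht₁ hlarge hlarge' hlow hhigh
  rw [← hsep g e]
  refine ProportionGE.of_bentChord (S := S) hxy.antitone he le_rfl le_rfl hp hδ
    (Real.sqrt_pos.2 hvar) (abs_nonneg _) hS ?_ ?_ ?_ hzw ?_ (Real.sq_sqrt hvar.le).ge hlarge
    (by linarith) ?_
  · simp [hn]
  · simpa using ht₀
  · rw [Int.cast_natCast, hn]
    linarith
  · rw [abs_le]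
    constructor <;> linarith
  · have hh : (K + M + 1 + k * (2 * (2 * D + 2) + p + 2) + (2 * D + 2)) * S ≤ h * S := by
      gcongr
      exact le_abs_self _
    have hkS : k * (p + 2) ≤ k * (p + 2) * S := le_mul_of_one_le_right (by positivity) hS
    rw [Int.cast_zero, sub_zero]
    linarith

end Raising

/-! ### Pinning the bottom curve from below -/

section Pinning

variable {k : ℕ} {x y : Fin k → ℤ} {g : ℤ → EReal} {e : Fin k} {p η ρ D : ℝ} {n s t G L v : ℤ}

lemma exists_window (hp : 0 ≤ p) (hL : 0 < L) (hsL₀ : 0 ≤ s - L) (hsL₁ : s + L ≤ n)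
    (hts : |t - s| ≤ L) (hρ : 0 ≤ ρ) (hρL : ρ ≤ p * L) (hpin : ∀ Q ∈ ensemble 0 n x y g, G ≤ Q e s)
    (htight : ∀ T ∈ Icc 0 n, ∀ v : ℤ, v ≤ G + p * (T - s) - ρ →
      ProportionGE (1 - η) (ensemble 0 n x y g) fun Q => v ≤ Q e T) :
    ∃ T₀ T₁ z w : ℤ, (0 ≤ T₀ ∧ T₀ + L = T₁ ∧ T₁ ≤ n) ∧ t ∈ Icc T₀ T₁ ∧ z ≤ w ∧
      chord T₀ T₁ z w s = G ∧ |w - z - p * L| ≤ ρ + 1 ∧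
      ProportionGE (1 - η) (ensemble 0 n x y g) fun Q => z ≤ Q e T₀ ∧ w ≤ Q e T₁ := by
  have hfin : (ensemble 0 n x y g).Finite := OmegaInter.finite
  have hts := abs_le.1 hts
  rcases le_total s t with hst | hst
  · have hfloor := Int.floor_le (p * L - ρ)
    refine ⟨s, s + L, G, G + ⌊p * L - ρ⌋, ⟨by omega, rfl, hsL₁⟩, ⟨hst, by omega⟩,
      le_add_of_nonneg_right (Int.floor_nonneg.2 (sub_nonneg.2 hρL)), by simp [chord], ?_, ?_⟩
    · push_cast
      rw [abs_le]
      constructor <;> linarith [Int.sub_one_lt_floor (p * L - ρ)]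
    · refine (htight (s + L) ⟨by omega, hsL₁⟩ _ ?_).mono hfin fun Q hQ hw => ⟨hpin Q hQ, hw⟩
      push_cast
      linarith
  · have hceil := Int.le_ceil (p * L + ρ)
    have hL' : (L : ℝ) ≠ 0 := Int.cast_ne_zero.2 hL.ne'
    refine ⟨s - L, s, G - ⌈p * L + ρ⌉, G, ⟨hsL₀, sub_add_cancel s L, by omega⟩, ⟨by omega, hst⟩,
      sub_le_self G (Int.ceil_nonneg (by positivity)), by simp [chord, hL'], ?_, ?_⟩
    · push_cast
      rw [abs_le]
      constructor <;> linarith [Int.ceil_lt_add_one (p * L + ρ)]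
    · refine (htight (s - L) ⟨hsL₀, by omega⟩ _ ?_).mono hfin fun Q hQ hz => ⟨hz, hpin Q hQ⟩
      push_cast
      linarith

lemma ProportionGE.of_pin (hx : Antitone x) (he : IsTop e) (hp : 0 ≤ p) (hη : η < 1) (hL : 0 < L)
    (hsL₀ : 0 ≤ s - L) (hsL₁ : s + L ≤ n) (hts : |t - s| ≤ L) (hρ : 0 ≤ ρ) (hρL : ρ ≤ p * L)
    (hρL' : ρ + 1 ≤ L) (hpin : ∀ Q ∈ ensemble 0 n x y g, G ≤ Q e s)
    (htight : ∀ T ∈ Icc 0 n, ∀ v : ℤ, v ≤ G + p * (T - s) - ρ →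
      ProportionGE (1 - η) (ensemble 0 n x y g) fun Q => v ≤ Q e T)
    (hD : 0 < D) (hvar : varianceBound (p + 1) * L ≤ η / k * D ^ 2)
    (hv : v ≤ G + p * (t - s) - (ρ + 1) / L * |(t - s : ℝ)| - k * (2 * D + p + 2) - D) :
    ProportionGE ((1 - η) * (1 - η)) (ensemble 0 n x y g) fun Q => v ≤ Q e t := by
  obtain ⟨T₀, T₁, z, w, ⟨hT₀, hT, hT₁⟩, ht, hzw, hG, hwz, hA⟩ :=
    exists_window hp hL hsL₀ hsL₁ hts hρ hρL hpin htight
  have hL' : (0 : ℝ) < L := Int.cast_pos.2 hL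
  have hTL : (T₁ - T₀ : ℝ) = L := by
    rw [← hT]
    push_cast
    ring
  set q : ℝ := (w - z) / (T₁ - T₀) with hq
  have hqp : |q - p| ≤ (ρ + 1) / L := by
    rwa [hq, hTL, div_sub' hL'.ne', abs_div, abs_of_pos hL', mul_comm,
      div_le_div_iff_of_pos_right hL']
  have hq₁ : q ≤ p + 1 := by
    linarith [(abs_le.1 hqp).2, (div_le_one hL').2 hρL']
  have hq₀ : 0 ≤ q := by
    rw [hq, hTL]
    exact div_nonneg (sub_nonneg.2 (Int.cast_le.2 hzw)) hL'.le
  have hchord : G + p * (t - s) - (ρ + 1) / L * |(t - s : ℝ)| ≤ chord T₀ T₁ z w t := by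
    have hsplit : chord T₀ T₁ z w t = chord T₀ T₁ z w s + p * (t - s) + (q - p) * (t - s) := by
      rw [chord, chord, hq]
      ring
    have hdev : |(q - p) * (t - s)| ≤ (ρ + 1) / L * |(t - s : ℝ)| := by
      rw [abs_mul]
      gcongr
    rw [hsplit, hG]
    linarith [(abs_le.1 hdev).1]
  refine hA.trans OmegaInter.finite (by linarith) ?_
  refine ProportionGE.of_chord hx he hη hT₀ (by omega) hT₁ hzw ht hD ?_ ?_
  · rw [← hq, hTL]
    exact (mul_le_mul_of_nonneg_right (varianceBound_mono hq₀ hq₁) hL'.le).trans hvar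
  · have hk : k * (2 * D + q + 1) ≤ k * (2 * D + p + 2) :=
      mul_le_mul_of_nonneg_left (by linarith) k.cast_nonneg
    linarith

lemma ProportionGE.of_pin_scaled {S l m b δ : ℝ} (hx : Antitone x) (he : IsTop e) (hp : 0 ≤ p)
    (hη : η < 1) (hS : 1 ≤ S) (hl : 0 < l) (hm : 1 ≤ m) (hb : 0 < b) (hδ : 0 ≤ δ)
    (hls₀ : l * S ^ 2 ≤ s) (hls₁ : s ≤ n - l * S ^ 2) (hts : |(t - s : ℝ)| ≤ l / 2 * S ^ 2)
    (hts' : 2 * m * |(t - s : ℝ)| ≤ l * δ / 4 * S ^ 2) (hlarge : 2 * m * S ≤ l * S ^ 2)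
    (hlarge' : 2 * m * S ≤ p * l * S ^ 2) (hpin : ∀ Q ∈ ensemble 0 n x y g, G ≤ Q e s)
    (htight : ∀ T ∈ Icc 0 n, ∀ v : ℤ, v ≤ G + p * (T - s) - (m - 1) * S →
      ProportionGE (1 - η) (ensemble 0 n x y g) fun Q => v ≤ Q e T)
    (hvar : varianceBound (p + 1) * l ≤ η / k * b ^ 2)
    (hv : v ≤ G + p * (t - s) - δ / 4 * S - k * (2 * (b * S) + p + 2) - b * S) :
    ProportionGE ((1 - η) * (1 - η)) (ensemble 0 n x y g) fun Q => v ≤ Q e t := by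
  have hS₀ : 0 < S := one_pos.trans_le hS
  have hmS : S ≤ m * S := le_mul_of_one_le_left hS₀.le hm
  have hL : (⌊l * S ^ 2⌋ : ℝ) ≤ l * S ^ 2 := Int.floor_le _
  have hL' : l / 2 * S ^ 2 ≤ ⌊l * S ^ 2⌋ := by linarith [Int.sub_one_lt_floor (l * S ^ 2)]
  have hL₀ : (0 : ℝ) < ⌊l * S ^ 2⌋ := hL'.trans_lt' (by positivity)
  have hV := varianceBound_pos (p + 1)
  refine ProportionGE.of_pin (L := ⌊l * S ^ 2⌋) (ρ := (m - 1) * S) (D := b * S) hx he hp hη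
    (by exact_mod_cast hL₀) ?_ ?_ ?_ (mul_nonneg (sub_nonneg.2 hm) hS₀.le) ?_ ?_ hpin htight
    (by positivity) ?_ ?_
  · exact sub_nonneg.2 (Int.floor_le_iff.2 (by linarith))
  · suffices (s + ⌊l * S ^ 2⌋ : ℝ) ≤ n by exact_mod_cast this
    linarith
  · exact_mod_cast hts.trans hL'
  · nlinarith [mul_le_mul_of_nonneg_left hL' hp]
  · linarith
  · calc varianceBound (p + 1) * ⌊l * S ^ 2⌋ ≤ varianceBound (p + 1) * l * S ^ 2 := by
          rw [mul_assoc]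
          gcongr
      _ ≤ η / k * b ^ 2 * S ^ 2 := by gcongr
      _ = η / k * (b * S) ^ 2 := by ring
  · have hdrift : ((m - 1) * S + 1) / ⌊l * S ^ 2⌋ * |(t - s : ℝ)| ≤ δ / 4 * S := by
      rw [div_mul_eq_mul_div, div_le_iff₀ hL₀]
      calc ((m - 1) * S + 1) * |(t - s : ℝ)| ≤ m * S * |(t - s : ℝ)| := by
            gcongr
            linarith
        _ = S / 2 * (2 * m * |(t - s : ℝ)|) := by ring
        _ ≤ S / 2 * (l * δ / 4 * S ^ 2) := by gcongr
        _ = δ * S / 4 * (l / 2 * S ^ 2) := by ring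
        _ ≤ δ * S / 4 * ⌊l * S ^ 2⌋ := by gcongr
        _ = δ / 4 * S * ⌊l * S ^ 2⌋ := by ring
    linarith

lemma bottom_curve_near_pin (hp : 0 < p) (hη : η ∈ Ioo (0 : ℝ) 1) {δ δ₂ : ℝ} (hδ : 0 < δ)
    (hδ₂ : 0 < δ₂) (M K : ℝ) {k : ℕ} (hk : 0 < k) :
    ∃ Δ ∈ Ioc 0 (δ₂ / 2), ∀ᶠ n : ℕ in atTop, ∀ x y : Fin k → ℤ, SideBound p M n x y →
      ∀ g, ∀ e : Fin k, IsTop e → ∀ s t G : ℤ, δ₂ * n ≤ s → s ≤ n - δ₂ * n → |(t - s : ℝ)| ≤ Δ * n →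
      G ≤ p * s + K * √(n : ℝ) → (∀ Q ∈ ensemble 0 n x y g, G ≤ Q e s) →
      ∀ v : ℤ, v ≤ G + p * (t - s) - δ * √(n : ℝ) →
        ProportionGE (1 - η) (ensemble 0 n x y g) fun Q => v ≤ Q e t := by
  have hη' : η / 2 ∈ Ioo (0 : ℝ) 1 := ⟨half_pos hη.1, by linarith [hη.2]⟩
  obtain ⟨R, hR⟩ := bottom_curve_tight hp hη' M k
  have hη₀ := hη'.1
  have hV := varianceBound_pos (p + 1)
  set b := δ / (4 * (2 * k + 1)) with hb_def
  have hb : 0 < b := by positivity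
  set l := min δ₂ (η / 2 / k * b ^ 2 / varianceBound (p + 1))
  have hl : 0 < l := by positivity
  have hlδ : l ≤ δ₂ := min_le_left _ _
  set m := |R + K| + 1
  have hm : 1 ≤ m := le_add_of_nonneg_left (abs_nonneg _)
  refine ⟨min (l / 2) (l * δ / (8 * m)), ⟨by positivity, (min_le_left _ _).trans (by gcongr)⟩, ?_⟩
  filter_upwards [hR, eventually_mul_sqrt_le (2 * m) hl,
    eventually_mul_sqrt_le (2 * m) (mul_pos hp hl),
    eventually_mul_sqrt_le (k * (p + 2)) (half_pos hδ)]
    with n hR ⟨hS, hlarge⟩ ⟨_, hlarge'⟩ ⟨_, hkS⟩ x y hxy g e he s t G hs₀ hs₁ hts hG hpin v hv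
  have hn : (n : ℝ) = √(n : ℝ) ^ 2 := (Real.sq_sqrt n.cast_nonneg).symm
  set S := √(n : ℝ)
  rw [hn] at hs₀ hs₁ hts hlarge hlarge' hkS
  have hlS : l * S ^ 2 ≤ δ₂ * S ^ 2 := by gcongr
  refine (ProportionGE.of_pin_scaled hxy.antitone he hp.le hη'.2 hS hl hm hb hδ.le
    (hlS.trans hs₀) ?_ (hts.trans ?_) ?_ hlarge hlarge' hpin
    (fun T hT v hv => hR x y hxy g e he T hT v ?_) ?_ ?_).of_le (by nlinarith)
  · rw [Int.cast_natCast, hn]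
    linarith
  · gcongr
    exact min_le_left _ _
  · calc 2 * m * |(t - s : ℝ)| ≤ 2 * m * (l * δ / (8 * m) * S ^ 2) := by
          gcongr
          exact hts.trans (by gcongr; exact min_le_right _ _)
      _ = l * δ / 4 * S ^ 2 := by
          field_simp
          norm_num
  · nlinarith [le_abs_self (R + K)]
  · rw [mul_comm, ← le_div_iff₀ hV]
    exact min_le_right _ _
  · have hkb : k * (2 * (b * S)) + b * S = δ / 4 * S := by
      rw [hb_def]
      field_simp
    have hkp : k * (p + 2) ≤ δ / 2 * S := by nlinarith
    linarith

end Pinning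

/-! ### Repulsion -/

lemma pow_mul_le_mul_pow_of_midpoint {F : ℤ → ℕ} {v : ℤ}
    (h : ∀ c : ℕ, F v * F (v + 2 * c) ≤ F (v + c) ^ 2) (l c : ℕ) :
    F v ^ 2 ^ l * F (v + 2 ^ l * c) ≤ F v * F (v + c) ^ 2 ^ l := by
  induction l generalizing c with
  | zero => simp
  | succ l ih =>
    have hdouble := ih (2 * c)
    push_cast at hdouble
    rw [← mul_assoc, ← pow_succ] at hdouble
    calc F v ^ 2 ^ (l + 1) * F (v + 2 ^ (l + 1) * c)
        = F v ^ 2 ^ l * (F v ^ 2 ^ l * F (v + 2 ^ (l + 1) * c)) := by ring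
      _ ≤ F v ^ 2 ^ l * (F v * F (v + 2 * c) ^ 2 ^ l) := Nat.mul_le_mul_left _ hdouble
      _ = F v * (F v * F (v + 2 * c)) ^ 2 ^ l := by ring
      _ ≤ F v * (F (v + c) ^ 2) ^ 2 ^ l := by gcongr; exact h c
      _ = F v * F (v + c) ^ 2 ^ (l + 1) := by ring

lemma OmegaInter.proportionGE_add {k : ℕ} {T₀ T₁ t v : ℤ} {x y : Fin k → ℤ} {f g : ℤ → EReal}
    {i : Fin k} {θ : ℝ} {l c : ℕ} (hθ : 0 ≤ θ)
    (h₀ : ProportionGE θ (OmegaInter T₀ T₁ x y f g) fun Q => v ≤ Q i t)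
    (h₁ : ProportionGE (θ ^ 2 ^ l) (OmegaInter T₀ T₁ x y f g) fun Q => v + 2 ^ l * c ≤ Q i t) :
    ProportionGE (θ * θ) (OmegaInter T₀ T₁ x y f g) fun Q => v + c ≤ Q i t := by
  set F : ℤ → ℕ := fun u => {Q ∈ OmegaInter T₀ T₁ x y f g | u ≤ Q i t}.ncard
  have hiter : (F v : ℝ) ^ 2 ^ l * F (v + 2 ^ l * c) ≤ F v * (F (v + c) : ℝ) ^ 2 ^ l :=
    mod_cast pow_mul_le_mul_pow_of_midpoint (fun c => ncard_mul_ncard_le_sq i t v c) l c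
  have hle : (F v : ℝ) ≤ (OmegaInter T₀ T₁ x y f g).ncard :=
    Nat.cast_le.2 (ncard_le_ncard (sep_subset _ _) OmegaInter.finite)
  rw [ProportionGE] at h₀ h₁ ⊢
  set N := ((OmegaInter T₀ T₁ x y f g).ncard : ℝ)
  have hN₀ : 0 ≤ N := Nat.cast_nonneg _
  rcases hN₀.eq_or_lt with hN | hN
  · rw [← hN, mul_zero]
    exact Nat.cast_nonneg _
  refine le_of_pow_le_pow_left₀ (n := 2 ^ l) (by positivity) (Nat.cast_nonneg _)
    (le_of_mul_le_mul_left ?_ hN)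
  calc N * (θ * θ * N) ^ 2 ^ l = (θ * N) ^ 2 ^ l * (θ ^ 2 ^ l * N) := by ring
    _ ≤ (F v : ℝ) ^ 2 ^ l * F (v + 2 ^ l * c) := by gcongr
    _ ≤ F v * (F (v + c) : ℝ) ^ 2 ^ l := hiter
    _ ≤ N * (F (v + c) : ℝ) ^ 2 ^ l := by gcongr

section Repulsion

variable {p η δ₂ : ℝ} {k : ℕ}

lemma exists_int_nat_near {a L δ S : ℝ} (hL : 0 < L) (hLδ : 4 * (L * δ) = 1) (hS : L * 4 ≤ S) :
    ∃ (u : ℤ) (c : ℕ), u ≤ a - δ * S ∧ a + δ * S ≤ u + c ∧ L * c ≤ S := by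
  have hδS : 0 < δ * S := mul_pos (by nlinarith) (by linarith)
  have hfloor := Int.lt_floor_add_one (a - δ * S)
  refine ⟨⌊a - δ * S⌋, ⌈2 * (δ * S) + 1⌉₊, Int.floor_le _, ?_, ?_⟩
  · linarith [Nat.le_ceil (2 * (δ * S) + 1)]
  · calc L * ⌈2 * (δ * S) + 1⌉₊ ≤ L * (2 * (δ * S) + 1 + 1) := by
          gcongr
          exact (Nat.ceil_lt_add_one (by positivity)).le
      _ = 4 * (L * δ) * (S / 2) + L * 2 := by ring
      _ ≤ S := by
          rw [hLδ]
          linarith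

lemma bottom_curve_repulsion (hp : 0 < p) (hη : η ∈ Ioo (0 : ℝ) 1) (hδ₂ : 0 < δ₂) (M K : ℝ)
    (hk : 0 < k) :
    ∃ δ > 0, ∃ Δ ∈ Ioc 0 (δ₂ / 2), ∀ᶠ n : ℕ in atTop, ∀ x y : Fin k → ℤ, SideBound p M n x y →
      ∀ g, ∀ e : Fin k, IsTop e → ∀ s t G : ℤ, δ₂ * n ≤ s → s ≤ n - δ₂ * n → |(t - s : ℝ)| ≤ Δ * n →
      G ≤ p * s + K * √(n : ℝ) → (∀ Q ∈ ensemble 0 n x y g, G ≤ Q e s) →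
      ∀ v : ℤ, v ≤ G + p * (t - s) + δ * √(n : ℝ) →
        ProportionGE (1 - η) (ensemble 0 n x y g) fun Q => v ≤ Q e t := by
  have hη' : η / 2 ∈ Ioo (0 : ℝ) 1 := ⟨half_pos hη.1, by linarith [hη.2]⟩
  obtain ⟨ε, hε, hraise⟩ := bottom_curve_raise hp (half_pos hδ₂) M (K + 1) k
  obtain ⟨l, hl⟩ := exists_pow_lt_of_lt_one hε (sub_lt_self 1 hη'.1)
  have hθ : (1 - η / 2) ^ 2 ^ l ≤ ε :=
    (pow_le_pow_of_le_one (sub_nonneg.2 hη'.2.le) (sub_le_self 1 hη'.1.le)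
      Nat.lt_two_pow_self.le).trans hl.le
  set δ : ℝ := 1 / (4 * 2 ^ l) with hδ_def
  have hδ : 0 < δ := by positivity
  obtain ⟨Δ, hΔ, hpinned⟩ := bottom_curve_near_pin hp hη' hδ hδ₂ M K hk
  refine ⟨δ, hδ, Δ, hΔ, ?_⟩
  filter_upwards [hraise, hpinned, eventually_mul_sqrt_le (2 ^ l * 4) one_pos]
    with n hraise hpinned ⟨hS, hl⟩ x y hxy g e he s t G hs₀ hs₁ hts hG hpin v hv
  set S := √(n : ℝ)
  have hn : (n : ℝ) = S ^ 2 := (Real.sq_sqrt n.cast_nonneg).symm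
  have hΔn : Δ * n ≤ δ₂ / 2 * n := mul_le_mul_of_nonneg_right hΔ.2 n.cast_nonneg
  have hts' := abs_le.1 hts
  obtain ⟨u, c, hu, huc, hlc⟩ := exists_int_nat_near (a := G + p * (t - s)) (L := 2 ^ l) (δ := δ)
    (S := S) (by positivity) (by rw [hδ_def]; field_simp) (by nlinarith)
  have hvc : (v : ℝ) ≤ u + c := by linarith
  refine (OmegaInter.proportionGE_add (v := u) (l := l) (c := c) (sub_nonneg.2 hη'.2.le)
    (hpinned x y hxy g e he s t G hs₀ hs₁ hts hG hpin u hu) ((hraise x y hxy g e he t (by linarith)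
      (by linarith) _ ?_).of_le hθ)).mono OmegaInter.finite (fun Q _ hQ => ?_) |>.of_le
    (by linarith [sq_nonneg (η / 2)])
  · have hδS : 0 ≤ δ * S := by positivity
    push_cast
    linarith
  · exact (by exact_mod_cast hvc : v ≤ u + c).trans hQ

end Repulsion

/-! ### Separation from the boundary -/

section Separation

variable {p η δ₂ : ℝ} {k : ℕ} {g : ℤ → EReal}

lemma IncrPath.apply_floor_le_interpZ {T₀ T₁ : ℤ} {L : ℤ → ℤ} (hL : IncrPath T₀ T₁ L) (t : ℝ) :
    (L ⌊t⌋ : ℝ) ≤ interpZ L t := by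
  have hstep : (L ⌊t⌋ : ℝ) ≤ L (⌊t⌋ + 1) :=
    Int.cast_le.2 (hL.monotone (le_add_of_nonneg_right one_pos.le))
  exact le_add_of_nonneg_right
    (mul_nonneg (sub_nonneg.2 (Int.floor_le t)) (sub_nonneg.2 hstep))

lemma OmegaInter.ceil_le_apply_of_isTop {T₀ T₁ s : ℤ} {x y : Fin k → ℤ} {f : ℤ → EReal}
    {Q : Fin k → ℤ → ℤ} {e : Fin k} {γ : ℝ} (hQ : Q ∈ OmegaInter T₀ T₁ x y f g) (he : IsTop e)
    (hs : s ∈ Ioc T₀ T₁) (hγ : g s = γ) : ⌈γ⌉ ≤ Q e (s - 1) := by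
  have he' : (e : ℕ) = k - 1 := by
    have : k - 1 ≤ (e : ℕ) := he ⟨k - 1, Nat.sub_one_lt (Fin.pos e).ne'⟩
    omega
  have hle := (hQ.2.2.2 s hs.1 hs.2).2.2 e he'
  rw [hγ, EReal.coe_le_coe_iff] at hle
  exact Int.ceil_le.2 hle

lemma exists_forall_le_line {W : Set ℤ} (hW : W.Finite) (htop : ∀ s ∈ W, g s ≠ ⊤) (p : ℝ) :
    (∀ s ∈ W, g s = ⊥) ∨ ∃ s₀ ∈ W, ∃ γ : ℝ, g s₀ = γ ∧
      ∀ s ∈ W, g s ≤ ((γ + p * (s - s₀) : ℝ) : EReal) := by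
  refine or_iff_not_imp_left.2 fun hne => ?_
  obtain ⟨s₀, hs₀, hmax⟩ := exists_max_image {s ∈ W | g s ≠ ⊥} (fun s => (g s).toReal - p * s)
    (hW.subset (sep_subset _ _)) (by push Not at hne; exact hne)
  refine ⟨s₀, hs₀.1, _, (EReal.coe_toReal (htop s₀ hs₀.1) hs₀.2).symm, fun s hs => ?_⟩
  by_cases hbot : g s = ⊥
  · exact hbot.trans_le bot_le
  · rw [← EReal.coe_toReal (htop s hs) hbot, EReal.coe_le_coe_iff]
    linarith [hmax s ⟨hs, hbot⟩]

lemma bottom_curve_above_boundary_point (hp : 0 < p) (hη : η ∈ Ioo (0 : ℝ) 1) (hδ₂ : 0 < δ₂)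
    (M K : ℝ) (hk : 0 < k) :
    ∃ δ > 0, ∃ Δ ∈ Ioc 0 (δ₂ / 2), ∀ᶠ n : ℕ in atTop, ∀ x y : Fin k → ℤ, SideBound p M n x y →
      ∀ (g : ℤ → EReal) (e : Fin k), IsTop e → ∀ (s : ℤ) (t γ : ℝ),
        2 * δ₂ * n ≤ s → s ≤ n - δ₂ * n → |t - s| ≤ Δ * n → g s = γ → γ ≤ p * s + K * √(n : ℝ) →
        ProportionGE (1 - η) (ensemble 0 n x y g) fun Q =>
          γ + p * (t - s) + δ * √(n : ℝ) ≤ interpZ (Q e) t := by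
  obtain ⟨δ, hδ, Δ, hΔ, hrepulsion⟩ := bottom_curve_repulsion hp hη hδ₂ M (K + p + 1) hk
  refine ⟨δ / 2, half_pos hδ, Δ / 2, ⟨half_pos hΔ.1, by linarith [hΔ.1, hΔ.2]⟩, ?_⟩
  filter_upwards [hrepulsion, eventually_mul_sqrt_le 2 (half_pos hΔ.1),
    eventually_mul_sqrt_le 1 (half_pos hδ)]
    with n hrepulsion ⟨hS, hΔn⟩ ⟨_, hδn⟩ x y hxy g e he s t γ hs₀ hs₁ hts hγ hγS
  have hn : (n : ℝ) = √(n : ℝ) ^ 2 := (Real.sq_sqrt n.cast_nonneg).symm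
  set S := √(n : ℝ)
  have hδS : 1 ≤ δ / 2 * S := by nlinarith
  have hΔδ₂ : Δ * n ≤ δ₂ / 2 * n := mul_le_mul_of_nonneg_right hΔ.2 n.cast_nonneg
  have hs : s ∈ Ioc 0 (n : ℤ) := by
    constructor
    · exact_mod_cast (by nlinarith [hΔ.1] : (0 : ℝ) < s)
    · exact_mod_cast (by nlinarith [hΔ.1] : (s : ℝ) ≤ n)
  have hfloor := Int.floor_le t
  have hfloor' := Int.lt_floor_add_one t
  rw [abs_le] at hts
  set v := ⌈⌈γ⌉ + p * (t - s) + δ / 2 * S⌉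
  have hv := Int.ceil_lt_add_one (⌈γ⌉ + p * (t - s) + δ / 2 * S)
  -- The boundary at time `s` constrains the curve at time `s - 1`.
  refine (hrepulsion x y hxy g e he (s - 1) ⌊t⌋ ⌈γ⌉ ?_ ?_ ?_ ?_
    (fun Q hQ => OmegaInter.ceil_le_apply_of_isTop hQ he hs hγ) v ?_).mono
      OmegaInter.finite fun Q hQ hvQ => ?_
  all_goals try push_cast
  · nlinarith
  · nlinarith
  · rw [abs_le]
    constructor <;> linarith
  · nlinarith [Int.ceil_lt_add_one γ]
  · nlinarith
  · have hvt : (v : ℝ) ≤ interpZ (Q e) t :=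
      (Int.cast_le.2 hvQ).trans ((hQ.1 e).apply_floor_le_interpZ _)
    linarith [Int.le_ceil γ, Int.le_ceil (⌈γ⌉ + p * (t - s) + δ / 2 * S)]

lemma proportionGE_separated (hp : 0 < p) (hη : η ∈ Ioo (0 : ℝ) 1) (hδ₂ : 0 < δ₂) (M K : ℝ)
    (hk : 0 < k) :
    ∃ δ > 0, ∃ Δ ∈ Ioo 0 δ₂, ∀ᶠ n : ℕ in atTop, ∀ x y : Fin k → ℤ, SideBound p M n x y →
      ∀ g : ℤ → EReal, (∀ s : ℤ, 0 ≤ s → s ≤ n → g s ≤ ((p * s + K * √(n : ℝ) : ℝ) : EReal)) →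
      ∀ e : Fin k, IsTop e → ∀ t₀ ∈ Icc δ₂ (1 - δ₂),
        ProportionGE (1 - η) (ensemble 0 n x y g) fun Q => ∀ s : ℤ,
          t₀ * n - Δ * n ≤ s → s ≤ t₀ * n + Δ * n →
            g s ≤ ((interpZ (Q e) (t₀ * n) - p * t₀ * n + p * s - δ * √(n : ℝ) : ℝ) : EReal) := by
  obtain ⟨δ, hδ, Δ, hΔ, habove⟩ :=
    bottom_curve_above_boundary_point hp hη (by positivity : 0 < δ₂ / 4) M K hk
  refine ⟨δ, hδ, Δ, ⟨hΔ.1, by linarith [hΔ.2]⟩, ?_⟩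
  filter_upwards [habove, eventually_gt_atTop 0] with n habove hn x y hxy g hg e he t₀ ht₀
  have hδ₂n : 0 < δ₂ * n := by positivity
  have hΔδ₂ : Δ * n ≤ δ₂ / 4 / 2 * n := mul_le_mul_of_nonneg_right hΔ.2 n.cast_nonneg
  have ht₀n : δ₂ * n ≤ t₀ * n ∧ t₀ * n ≤ (1 - δ₂) * n :=
    ⟨mul_le_mul_of_nonneg_right ht₀.1 n.cast_nonneg, mul_le_mul_of_nonneg_right ht₀.2 n.cast_nonneg⟩
  set W := {s : ℤ | t₀ * n - Δ * n ≤ s ∧ s ≤ t₀ * n + Δ * n}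
  have hW : W ⊆ Icc 0 (n : ℤ) := fun s hs => by
    constructor
    · exact_mod_cast (by linarith [hs.1] : (0 : ℝ) ≤ s)
    · exact_mod_cast (by linarith [hs.2] : (s : ℝ) ≤ n)
  have htop : ∀ s ∈ W, g s ≠ ⊤ := fun s hs =>
    ((hg s (hW hs).1 (hW hs).2).trans_lt (EReal.coe_lt_top _)).ne
  rcases exists_forall_le_line ((finite_Icc _ _).subset hW) htop p with
    hbot | ⟨s₀, hs₀, γ, hγ, hline⟩
  · exact (ProportionGE.of_forall fun Q _ s hs hs' => (hbot s ⟨hs, hs'⟩).trans_le bot_le).of_le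
      (sub_le_self 1 hη.1.le)
  have hγS : γ ≤ p * s₀ + K * √(n : ℝ) :=
    EReal.coe_le_coe_iff.1 (hγ ▸ hg s₀ (hW hs₀).1 (hW hs₀).2)
  refine (habove x y hxy g e he s₀ (t₀ * n) γ (by linarith [hs₀.1]) (by linarith [hs₀.2])
    (abs_le.2 ⟨by linarith [hs₀.2], by linarith [hs₀.1]⟩) hγ hγS).mono OmegaInter.finite
      fun Q _ hQ s hs hs' => (hline s ⟨hs, hs'⟩).trans (EReal.coe_le_coe_iff.2 ?_)
  linarith

end Separation

theorem bottom_boundary_separation_general {p η δ₂ : ℝ} {k : ℕ} (hp : 0 < p) (hη : 0 < η)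
    (hδ₂ : 0 < δ₂) (M K : ℝ) (hk : 0 < k) :
    ∃ δ > 0, ∃ Δ ∈ Ioo 0 δ₂, ∀ᶠ n : ℕ in atTop, ∀ x y : Fin k → ℤ, SideBound p M n x y →
      ∀ g : ℤ → EReal, (∀ s : ℤ, 0 ≤ s → s ≤ n → g s ≤ ((p * s + K * √(n : ℝ) : ℝ) : EReal)) →
      ∀ t₀ ∈ Icc δ₂ (1 - δ₂),
      ∀ (Ω : Type*) (_ : MeasurableSpace Ω) (P : Measure Ω), IsProbabilityMeasure P →
      ∀ Q : Ω → Fin k → ℤ → ℤ, UniformOn P Q (OmegaInter 0 n x y (fun _ => ⊤) g) →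
        ENNReal.ofReal (1 - η) <
          P {ω | ∀ s : ℤ, t₀ * n - Δ * n ≤ s → s ≤ t₀ * n + Δ * n →
            g s ≤ ((interpZ (Q ω ⟨k - 1, Nat.sub_one_lt hk.ne'⟩) (t₀ * n)
              - p * t₀ * n + p * s - δ * √(n : ℝ) : ℝ) : EReal)} := by
  set η' := min (η / 2) (1 / 2)
  have hη' : η' ∈ Ioo 0 1 := ⟨by positivity, (min_le_right ..).trans_lt one_half_lt_one⟩
  have hη'η : η' < η := (min_le_left ..).trans_lt (half_lt_self hη)
  obtain ⟨δ, hδ, Δ, hΔ, hsep⟩ := proportionGE_separated hp hη' hδ₂ M K hk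
  refine ⟨δ, hδ, Δ, hΔ, hsep.mono fun n hsep x y hxy g hg t₀ ht₀ Ω _ P _ Q hQ => ?_⟩
  have hlast : IsTop (⟨k - 1, Nat.sub_one_lt hk.ne'⟩ : Fin k) := fun i => Nat.le_sub_one_of_lt i.2
  calc ENNReal.ofReal (1 - η) < ENNReal.ofReal (1 - η') :=
        (ENNReal.ofReal_lt_ofReal_iff (sub_pos.2 hη'.2)).2 (sub_lt_sub_left hη'η 1)
    _ ≤ _ := hQ.ofReal_le_measure OmegaInter.finite (hsep x y hxy g hg _ hlast t₀ ht₀)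

/-- (Lemma 4.1, bottom boundary separation.) With high probability, the lowest curve of an
interlacing ensemble at time `t0·n` is separated by `δ^sep·√n` from the (recentered) bottom
boundary `g` over a macroscopic window of radius `Δ^sep·n` around `t0·n`. -/
theorem bottom_boundary_separation
    (p η Mbot Mside : ℝ) (hp : 0 < p) (hη : 0 < η) (hMbot : 0 < Mbot) (hMside : 0 < Mside)
    (k : ℕ) (hk : 0 < k) (δ2 : ℝ) (hδ2 : δ2 ∈ Set.Ioo (0 : ℝ) (1 / 2)) :
    ∃ (N5 : ℕ) (δsep Δsep : ℝ), 0 < δsep ∧ Δsep ∈ Set.Ioo 0 δ2 ∧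
      ∀ n : ℕ, N5 ≤ n →
      ∀ x y : Fin k → ℤ,
        (∀ i j : Fin k, i ≤ j → x j ≤ x i) → (∀ i j : Fin k, i ≤ j → y j ≤ y i) →
        (∀ i, |(x i : ℝ)| ≤ Mside * Real.sqrt n) →
        (∀ i, |(y i : ℝ) - p * n| ≤ Mside * Real.sqrt n) →
      ∀ g : ℤ → EReal, (∀ s : ℤ, 0 ≤ s → s ≤ n → g s ≠ ⊤) →
        (∀ s : ℤ, 0 ≤ s → s ≤ n →
          g s ≤ ((p * s + Mbot * Real.sqrt n : ℝ) : EReal)) →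
        (OmegaInter 0 n x y (fun _ => (⊤ : EReal)) g).Nonempty →
      ∀ t0 ∈ Set.Icc δ2 (1 - δ2),
      ∀ (Ω : Type) (_ : MeasurableSpace Ω) (P : Measure Ω), IsProbabilityMeasure P →
      ∀ Q : Ω → Fin k → ℤ → ℤ,
        UniformOn P Q (OmegaInter 0 n x y (fun _ => (⊤ : EReal)) g) →
        ENNReal.ofReal (1 - η) <
          P {ω | ∀ s : ℤ, t0 * n - Δsep * n ≤ (s : ℝ) → (s : ℝ) ≤ t0 * n + Δsep * n →
            g s ≤ ((interpZ (Q ω ⟨k - 1, Nat.sub_lt hk Nat.one_pos⟩) (t0 * n)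
              - p * t0 * n + p * s - δsep * Real.sqrt n : ℝ) : EReal)} := by
  obtain ⟨δ, hδ, Δ, hΔ, hsep⟩ := bottom_boundary_separation_general hp hη hδ2.1 Mside Mbot hk
  obtain ⟨N, hN⟩ := eventually_atTop.1 hsep
  refine ⟨N, δ, Δ, hδ, hΔ, fun n hn x y hx _ hxM hyM g _ hg _ => hN n hn x y ⟨?_, ?_, ?_⟩ g hg⟩
  · exact fun i j hij => hx i j hij
  · exact fun i => (abs_le.1 (hxM i)).1
  · exact fun i => by linarith [(abs_le.1 (hyM i)).1]
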